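/- Let d ≥ 1 and let E₁, E₂, E₃ ⊂ ℝ^d be bounded Lebesgue measurable sets. There exist mappings [0,1] ∋ t ↦ E_j(t) (j = 1,2,3), taking values in Lebesgue measurable subsets of ℝ^d defined up to null sets, such that: (1) |E_j(0) Δ E_j| = 0 and |E_j(1) Δ E_j⋆| = 0; (2) |E_j(t)| = |E_j| for all t ∈ [0,1]; (3) |E_j(s) Δ E_j(t)| → 0 as s → t; (4) the function t ↦ T(E₁(t),E₂(t),E₃(t)) is continuous and nondecreasing on [0,1]. -/

import Mathlib

/-!
The deformation is a continuous version of iterated Steiner symmetrization.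

In dimension one, a finite union of half-open intervals is moved by the *sticky flow* `phi`: every
interval keeps its length, its centre is multiplied by a scale decreasing from `1` to `0`, and
intervals that collide are merged (`exists_path`). This flow preserves measure and inclusions, and
it ends with one interval centred at the origin. For three single intervals, `T` is the integral of
a symmetric decreasing function over a window centred at the sum of the three centres, hence it
increases as the scale decreases; by trilinearity `T` is nondecreasing along the flow
(`TT_phi_mono`).

On a product `ℝ × X` the flow is applied to the fibres of elementary sets. Since it preserves
measure and increases intersections, it contracts `μ (E ∆ F)`, and it extends by density to sets of
finite measure, with `T` still nondecreasing (`step_prod`). Splitting `ℝ^d` along a direction `v`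
gives a flow of triples of subsets of `ℝ^d` (`exists_step`). It never decreases the overlap of a
set with a centred ball `B`, and at time `1` this overlap has grown by at least
`|(E \ B) ∩ (B \ E - v)|`. Averaging over `v` in a large ball provides a direction for which the
total gain is at least a constant times `∑ j, |E j \ B j| ^ 2`, where `B j` is the ball with the
measure of `E j` (`exists_gain_step`). As the overlaps are bounded, iteration forces
`|E j \ B j| → 0` (`exists_sequence`).

Running the steps one after the other gives a deformation on `[0, ∞)` that converges in measure to
the triple of balls, and the change of time `t ↦ t / (1 - t)` brings it to `[0, 1]`. Continuity of
`T` in time follows from its continuity with respect to convergence in measure (`tendsto_TT`).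
-/

open MeasureTheory Set

noncomputable section

/-- `ℝ^d` with Lebesgue measure. -/
abbrev Vec (d : ℕ) := EuclideanSpace ℝ (Fin d)

/-- Indicator function of a set, with value `1 : ℝ`. -/
def ind {d : ℕ} (E : Set (Vec d)) : Vec d → ℝ := E.indicator 1

/-- Convolution of two functions on `ℝ^d`. -/
def conv {d : ℕ} (f g : Vec d → ℝ) (x : Vec d) : ℝ := ∫ y, f y * g (x - y)

/-- `E⋆`: the closed ball centered at the origin with the same measure as `E`. -/
def ballStar {d : ℕ} (E : Set (Vec d)) : Set (Vec d) :=
  Metric.closedBall 0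
    (((volume E).toReal / (volume (Metric.closedBall (0 : Vec d) 1)).toReal) ^ ((1 : ℝ) / d))

/-- The trilinear form `T(E₁,E₂,E₃) = ∫∫ 1_{E₁}(x) 1_{E₂}(y) 1_{E₃}(−x−y) dx dy`. -/
def Tfun {d : ℕ} (E : Fin 3 → Set (Vec d)) : ℝ :=
  ∫ p : Vec d × Vec d, ind (E 0) p.1 * ind (E 1) p.2 * ind (E 2) (-p.1 - p.2)

/-! ### The sticky flow of finite unions of intervals -/

/-- The half-open interval of length `p.2` centred at `l * p.1`; `l` is the scale parameter, which
decreases from `1` to `0` along the flow. -/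
def seg (p : ℝ × ℝ) (l : ℝ) : Set ℝ := Ico (l * p.1 - p.2 / 2) (l * p.1 + p.2 / 2)

/-- The union of the intervals `seg p l` encoded by the finite set `C` at scale `l`. -/
def cfg (C : Finset (ℝ × ℝ)) (l : ℝ) : Set ℝ := ⋃ p ∈ C, seg p l

/-- At scale `l` the intervals of `C` are nondegenerate and weakly separated: they are disjoint,
but may have common endpoints. -/
def WSep (C : Finset (ℝ × ℝ)) (l : ℝ) : Prop :=
  (∀ p ∈ C, 0 < p.2) ∧ ∀ p ∈ C, ∀ q ∈ C, p ≠ q → (p.2 + q.2) / 2 ≤ l * |p.1 - q.1|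

/-- On the scales `[a, b]` the path `P` is given by one configuration, whose intervals move freely
without overlapping. -/
def FreeOn (P : ℝ → Set ℝ) (a b : ℝ) : Prop :=
  ∃ C, WSep C a ∧ ∀ l ∈ Icc a b, P l = cfg C l

/-- `P` is a piecewise free path on the scales `[0, B]`: there are finitely many collision scales
`S`, and `P` is free on every interval of scales with no collision in its interior. -/
def PFree (P : ℝ → Set ℝ) (B : ℝ) : Prop :=
  ∃ S : Finset ℝ, ∀ a b, 0 ≤ a → a < b → b ≤ B → (∀ s ∈ S, s ∉ Ioo a b) → FreeOn P a b

lemma WSep.mono {C : Finset (ℝ × ℝ)} {a b : ℝ} (h : WSep C a) (hab : a ≤ b) : WSep C b :=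
  ⟨h.1, fun p hp q hq hpq => (h.2 p hp q hq hpq).trans
    (mul_le_mul_of_nonneg_right hab (abs_nonneg _))⟩

/-- Weakly separated intervals are strictly separated at every larger scale. -/
lemma WSep.strict {C : Finset (ℝ × ℝ)} {a b : ℝ} (h : WSep C a) (hab : a < b)
    {p q : ℝ × ℝ} (hp : p ∈ C) (hq : q ∈ C) (hpq : p ≠ q) : (p.2 + q.2) / 2 < b * |p.1 - q.1| := by
  have h1 := h.2 p hp q hq hpq
  have h2 := h.1 p hp
  have h3 := h.1 q hq
  have h4 : 0 < |p.1 - q.1| := by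
    rcases (abs_nonneg (p.1 - q.1)).eq_or_lt with h0 | h0
    · rw [← h0] at h1; linarith
    · exact h0
  nlinarith

/-- A transitive relation between scales that holds across every collision-free interval holds
across all of them. -/
lemma propagate {R : ℝ → ℝ → Prop} {B : ℝ} (S : Finset ℝ)
    (hfree : ∀ a b, 0 ≤ a → a < b → b ≤ B → (∀ s ∈ S, s ∉ Ioo a b) → R a b)
    (htrans : ∀ a b c, a < b → b < c → R a b → R b c → R a c) :
    ∀ a b, 0 ≤ a → a < b → b ≤ B → R a b := by
  classical
  suffices H : ∀ n : ℕ, ∀ a b, 0 ≤ a → a < b → b ≤ B →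
      (S.filter (· ∈ Ioo a b)).card ≤ n → R a b from
    fun a b h1 h2 h3 => H _ a b h1 h2 h3 le_rfl
  intro n
  induction n with
  | zero =>
    intro a b h1 h2 h3 h4
    refine hfree a b h1 h2 h3 fun s hs hs' => ?_
    have := Finset.card_eq_zero.1 (Nat.le_zero.1 h4)
    have h5 : s ∈ S.filter (· ∈ Ioo a b) := Finset.mem_filter.2 ⟨hs, hs'⟩
    rw [this] at h5
    simp at h5
  | succ n ih =>
    intro a b h1 h2 h3 h4
    by_cases h : ∃ s ∈ S, s ∈ Ioo a b
    · obtain ⟨s, hs, hs'⟩ := h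
      have key : ∀ c d, a ≤ c → d ≤ b → s ∉ Ioo c d →
          (S.filter (· ∈ Ioo c d)).card ≤ n := by
        intro c d hc hd hsn
        have : (S.filter (· ∈ Ioo c d)).card < (S.filter (· ∈ Ioo a b)).card := by
          apply Finset.card_lt_card
          refine Finset.ssubset_iff_of_subset ?_ |>.2 ⟨s, Finset.mem_filter.2 ⟨hs, hs'⟩, ?_⟩
          · intro x hx
            rw [Finset.mem_filter] at hx ⊢
            exact ⟨hx.1, Ioo_subset_Ioo hc hd hx.2⟩
          · intro hx
            exact hsn (Finset.mem_filter.1 hx).2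
        omega
      refine htrans a s b hs'.1 hs'.2 (ih a s h1 hs'.1 (hs'.2.le.trans h3) ?_)
        (ih s b (h1.trans hs'.1.le) hs'.2 h3 ?_)
      · exact key a s le_rfl hs'.2.le (by simp)
      · exact key s b hs'.1.le le_rfl (by simp)
    · push Not at h
      exact hfree a b h1 h2 h3 h

/-- Two touching or overlapping intervals of a configuration can be replaced by their union. The
number of intervals drops, which is what makes the sticky flow terminate. -/
lemma exists_merge {C : Finset (ℝ × ℝ)} {l : ℝ} (hl : 0 < l) (hpos : ∀ p ∈ C, 0 < p.2)
    {p q : ℝ × ℝ} (hp : p ∈ C) (hq : q ∈ C) (hpq : p ≠ q)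
    (ht : l * |p.1 - q.1| ≤ (p.2 + q.2) / 2) :
    ∃ D : Finset (ℝ × ℝ), D.card < C.card ∧ (∀ r ∈ D, 0 < r.2) ∧ cfg D l = cfg C l := by
  classical
  set lo := min (l * p.1 - p.2 / 2) (l * q.1 - q.2 / 2) with hlo
  set hi := max (l * p.1 + p.2 / 2) (l * q.1 + q.2 / 2) with hhi
  have hp0 := hpos p hp
  have hq0 := hpos q hq
  have hlohi : lo < hi := by
    have h1 : lo ≤ l * p.1 - p.2 / 2 := min_le_left _ _
    have h2 : l * p.1 + p.2 / 2 ≤ hi := le_max_left _ _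
    linarith
  let r : ℝ × ℝ := ((lo + hi) / (2 * l), hi - lo)
  have hr1 : l * r.1 - r.2 / 2 = lo := by
    simp only [r]; field_simp; ring
  have hr2 : l * r.1 + r.2 / 2 = hi := by
    simp only [r]; field_simp; ring
  have ht1 : l * p.1 - l * q.1 ≤ (p.2 + q.2) / 2 := by
    have := le_abs_self (p.1 - q.1); nlinarith
  have ht2 : l * q.1 - l * p.1 ≤ (p.2 + q.2) / 2 := by
    have := neg_abs_le (p.1 - q.1); nlinarith
  have hunion : seg r l = seg p l ∪ seg q l := by
    unfold seg
    rw [hr1, hr2, Ico_union_Ico']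
    · linarith
    · linarith
  refine ⟨insert r ((C.erase p).erase q), ?_, ?_, ?_⟩
  · have h1 : ((C.erase p).erase q).card + 1 = (C.erase p).card :=
      Finset.card_erase_add_one (Finset.mem_erase.2 ⟨hpq.symm, hq⟩)
    have h2 : (C.erase p).card + 1 = C.card := Finset.card_erase_add_one hp
    have h3 := Finset.card_insert_le r ((C.erase p).erase q)
    omega
  · intro s hs
    rcases Finset.mem_insert.1 hs with rfl | hs
    · simp only [r]; linarith
    · exact hpos s (Finset.mem_of_mem_erase (Finset.mem_of_mem_erase hs))
  · unfold cfg
    rw [Finset.set_biUnion_insert, hunion]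
    conv_rhs => rw [← Finset.insert_erase hp, Finset.set_biUnion_insert,
      ← Finset.insert_erase (Finset.mem_erase.2 ⟨hpq.symm, hq⟩), Finset.set_biUnion_insert]
    rw [Set.union_assoc]

/-- Existence of the sticky path ending, at scale `b`, in a given configuration: intervals move
freely down to the first collision, are merged there, and the path is continued by induction on
the number of intervals. -/
lemma exists_path : ∀ n : ℕ, ∀ b : ℝ, 0 < b → ∀ C : Finset (ℝ × ℝ), C.card ≤ n →
    (∀ p ∈ C, 0 < p.2) → ∃ P, PFree P b ∧ P b = cfg C b := by
  classical
  intro n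
  induction n using Nat.strong_induction_on with
  | _ n ih =>
  intro b hb C hC hpos
  by_cases hsep : ∀ p ∈ C, ∀ q ∈ C, p ≠ q → (p.2 + q.2) / 2 < b * |p.1 - q.1|
  · by_cases hsub : C.offDiag = ∅
    · refine ⟨fun l => cfg C l, ⟨∅, fun a b' h1 h2 h3 h4 => ⟨C, ⟨hpos, ?_⟩, fun _ _ => rfl⟩⟩, rfl⟩
      intro p hp q hq hpq
      have : (p, q) ∈ C.offDiag := Finset.mem_offDiag.2 ⟨hp, hq, hpq⟩
      rw [hsub] at this
      simp at this
    · -- the scale of the first collision is the largest at which some pair of intervals touches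
      obtain ⟨⟨p, q⟩, hpq, hmax⟩ := Finset.exists_max_image C.offDiag
        (fun x => (x.1.2 + x.2.2) / 2 / |x.1.1 - x.2.1|) (Finset.nonempty_of_ne_empty hsub)
      obtain ⟨hp, hq, hne⟩ := Finset.mem_offDiag.1 hpq
      simp only at hp hq hne hmax
      have habs : ∀ x ∈ C, ∀ y ∈ C, x ≠ y → 0 < |x.1 - y.1| := by
        intro x hx y hy hxy
        have h1 := hsep x hx y hy hxy
        have h2 := hpos x hx
        have h3 := hpos y hy
        have h4 : 0 < b * |x.1 - y.1| := by linarith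
        exact (pos_iff_pos_of_mul_pos h4).1 hb
      set a := (p.2 + q.2) / 2 / |p.1 - q.1| with ha
      have ha0 : 0 < a := by
        have h2 := hpos p hp
        have h3 := hpos q hq
        have := habs p hp q hq hne
        positivity
      have hab : a < b := by
        rw [ha, div_lt_iff₀ (habs p hp q hq hne)]
        exact hsep p hp q hq hne
      have hw : WSep C a := by
        refine ⟨hpos, fun x hx y hy hxy => ?_⟩
        rw [← div_le_iff₀ (habs x hx y hy hxy)]
        exact hmax (x, y) (Finset.mem_offDiag.2 ⟨hx, hy, hxy⟩)
      have htouch : a * |p.1 - q.1| ≤ (p.2 + q.2) / 2 := by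
        rw [ha, div_mul_cancel₀ _ (habs p hp q hq hne).ne']
      obtain ⟨D, hD, hDpos, hDC⟩ := exists_merge ha0 hpos hp hq hne htouch
      obtain ⟨P, ⟨S, hS⟩, hP⟩ := ih D.card (by omega) a ha0 D le_rfl hDpos
      refine ⟨fun l => if a ≤ l then cfg C l else P l, ⟨insert a S, ?_⟩, by simp [hab.le]⟩
      intro x y h1 h2 h3 h4
      rcases le_or_gt y a with hya | hya
      · obtain ⟨C', hC', hC''⟩ := hS x y h1 h2 hya
          (fun s hs => h4 s (Finset.mem_insert_of_mem hs))
        refine ⟨C', hC', fun l hl => ?_⟩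
        rw [← hC'' l hl]
        dsimp only
        split_ifs with hal
        · have : l = a := le_antisymm (hl.2.trans hya) hal
          rw [this, hP, hDC]
        · rfl
      · have hax : a ≤ x := by
          by_contra hax
          push Not at hax
          exact h4 a (Finset.mem_insert_self _ _) ⟨hax, hya⟩
        refine ⟨C, hw.mono hax, fun l hl => ?_⟩
        exact if_pos (hax.trans hl.1)
  · push Not at hsep
    obtain ⟨p, hp, q, hq, hpq, ht⟩ := hsep
    obtain ⟨D, hD, hDpos, hDC⟩ := exists_merge hb hpos hp hq hpq ht
    obtain ⟨P, hP1, hP2⟩ := ih D.card (by omega) b hb D le_rfl hDpos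
    exact ⟨P, hP1, hP2.trans hDC⟩

/-- An interval inside a strictly separated configuration lies in one of its intervals. -/
lemma seg_subset_of_subset_cfg {D : Finset (ℝ × ℝ)} {a b : ℝ} (hD : WSep D a) (hab : a < b)
    {p : ℝ × ℝ} (hp : 0 < p.2) (h : seg p b ⊆ cfg D b) : ∃ q ∈ D, seg p b ⊆ seg q b := by
  have h0 : b * p.1 - p.2 / 2 ∈ cfg D b := h ⟨le_rfl, by linarith⟩
  simp only [cfg, mem_iUnion, exists_prop] at h0
  obtain ⟨q, hq, hq1, hq2⟩ := h0
  refine ⟨q, hq, Ico_subset_Ico hq1 ?_⟩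
  by_contra hcon
  push Not at hcon
  have h1 : b * q.1 + q.2 / 2 ∈ cfg D b := h ⟨hq2.le, hcon⟩
  simp only [cfg, mem_iUnion, exists_prop] at h1
  obtain ⟨r, hr, hr1, hr2⟩ := h1
  have hqr : q ≠ r := by
    rintro rfl; linarith
  have h3 := hD.strict hab hq hr hqr
  have hr0 := hD.1 r hr
  have hq0 := hD.1 q hq
  rcases abs_cases (q.1 - r.1) with ⟨h4, _⟩ | ⟨h4, _⟩ <;> rw [h4] at h3 <;> nlinarith

/-- Inclusions persist under free motion: if `seg p b ⊆ seg q b` then the centres are within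
`(q.2 - p.2) / 2`, and they only get closer as the scale decreases. -/
lemma free_mono {P Q : ℝ → Set ℝ} {a b : ℝ} (ha : 0 ≤ a) (hab : a < b) (hP : FreeOn P a b)
    (hQ : FreeOn Q a b) (h : P b ⊆ Q b) : P a ⊆ Q a := by
  obtain ⟨C, hC, hPC⟩ := hP
  obtain ⟨D, hD, hQD⟩ := hQ
  rw [hPC b ⟨hab.le, le_rfl⟩, hQD b ⟨hab.le, le_rfl⟩] at h
  rw [hPC a ⟨le_rfl, hab.le⟩, hQD a ⟨le_rfl, hab.le⟩]
  apply iUnion₂_subset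
  intro p hp
  have hpp := hC.1 p hp
  obtain ⟨q, hq, hpq⟩ := seg_subset_of_subset_cfg hD hab hpp
    ((subset_biUnion_of_mem (u := fun p => seg p b) hp).trans h)
  refine Subset.trans ?_ (subset_biUnion_of_mem (u := fun p => seg p a) hq)
  obtain ⟨h1, h2⟩ := (Ico_subset_Ico_iff (by linarith)).1 hpq
  have hb : 0 < b := ha.trans_lt hab
  -- `b * |p.1 - q.1| ≤ (q.2 - p.2) / 2`, hence the same with `a`
  have h3 : b * |p.1 - q.1| ≤ (q.2 - p.2) / 2 := by
    rcases abs_cases (p.1 - q.1) with ⟨h4, _⟩ | ⟨h4, _⟩ <;> rw [h4] <;> linarith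
  have h5 : a * |p.1 - q.1| ≤ (q.2 - p.2) / 2 :=
    (mul_le_mul_of_nonneg_right hab.le (abs_nonneg _)).trans h3
  have h6 : a * (p.1 - q.1) ≤ a * |p.1 - q.1| := mul_le_mul_of_nonneg_left (le_abs_self _) ha
  have h7 : a * (q.1 - p.1) ≤ a * |p.1 - q.1| := by
    rw [abs_sub_comm]; exact mul_le_mul_of_nonneg_left (le_abs_self _) ha
  apply Ico_subset_Ico <;> linarith

/-- Comparison principle. In particular the sticky path with given initial set is unique. -/
lemma PFree.mono {P Q : ℝ → Set ℝ} (hP : PFree P 1) (hQ : PFree Q 1) (h : P 1 ⊆ Q 1)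
    {l : ℝ} (hl : l ∈ Icc (0 : ℝ) 1) : P l ⊆ Q l := by
  classical
  obtain ⟨S, hS⟩ := hP
  obtain ⟨S', hS'⟩ := hQ
  rcases hl.2.eq_or_lt with rfl | hl1
  · exact h
  refine propagate (R := fun a b => P b ⊆ Q b → P a ⊆ Q a) (B := 1) (S ∪ S') ?_
    (fun a b c _ _ h1 h2 h3 => h1 (h2 h3)) l 1 hl.1 hl1 le_rfl h
  intro a b h1 h2 h3 h4 h5
  exact free_mono h1 h2 (hS a b h1 h2 h3 fun s hs => h4 s (Finset.mem_union_left _ hs))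
    (hS' a b h1 h2 h3 fun s hs => h4 s (Finset.mem_union_right _ hs)) h5

lemma seg_disjoint {C : Finset (ℝ × ℝ)} {l : ℝ} (h : WSep C l) {p q : ℝ × ℝ} (hp : p ∈ C)
    (hq : q ∈ C) (hpq : p ≠ q) : Disjoint (seg p l) (seg q l) := by
  rw [Set.disjoint_left]
  intro x hx hy
  have h1 := h.2 p hp q hq hpq
  obtain ⟨hx1, hx2⟩ := hx
  obtain ⟨hy1, hy2⟩ := hy
  rcases abs_cases (p.1 - q.1) with ⟨h4, _⟩ | ⟨h4, _⟩ <;> rw [h4] at h1 <;> nlinarith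

lemma measurableSet_seg (p : ℝ × ℝ) (l : ℝ) : MeasurableSet (seg p l) := measurableSet_Ico

lemma measurableSet_cfg (C : Finset (ℝ × ℝ)) (l : ℝ) : MeasurableSet (cfg C l) :=
  Finset.measurableSet_biUnion _ fun p _ => measurableSet_seg p l

lemma volume_seg (p : ℝ × ℝ) (l : ℝ) : volume (seg p l) = ENNReal.ofReal p.2 := by
  rw [seg, Real.volume_Ico]; congr 1; ring

lemma volume_cfg {C : Finset (ℝ × ℝ)} {l : ℝ} (h : WSep C l) :
    volume (cfg C l) = ∑ p ∈ C, ENNReal.ofReal p.2 := by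
  rw [cfg, measure_biUnion_finset (fun p hp q hq hpq => seg_disjoint h hp hq hpq)
    fun p _ => measurableSet_seg p l]
  simp [volume_seg]

lemma volume_seg_symmDiff (p : ℝ × ℝ) (s t : ℝ) :
    volume (symmDiff (seg p s) (seg p t)) ≤ ENNReal.ofReal (4 * |p.1| * |t - s|) := by
  have h : symmDiff (seg p s) (seg p t) ⊆
      Icc (s * p.1 - p.2 / 2 - |p.1| * |t - s|) (s * p.1 - p.2 / 2 + |p.1| * |t - s|) ∪
      Icc (s * p.1 + p.2 / 2 - |p.1| * |t - s|) (s * p.1 + p.2 / 2 + |p.1| * |t - s|) := by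
    have hm : |t * p.1 - s * p.1| = |p.1| * |t - s| := by rw [← abs_mul]; congr 1; ring
    rw [← hm]
    have h1 := le_abs_self (t * p.1 - s * p.1)
    have h2 := neg_abs_le (t * p.1 - s * p.1)
    rintro x (⟨⟨hx1, hx2⟩, hx⟩ | ⟨⟨hx1, hx2⟩, hx⟩)
    · rcases lt_or_ge x (t * p.1 - p.2 / 2) with h3 | h3
      · left; constructor <;> linarith
      · right
        have : t * p.1 + p.2 / 2 ≤ x := by
          by_contra h4; push Not at h4; exact hx ⟨h3, h4⟩
        constructor <;> linarith
    · rcases lt_or_ge x (s * p.1 - p.2 / 2) with h3 | h3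
      · left; constructor <;> linarith
      · right
        have : s * p.1 + p.2 / 2 ≤ x := by
          by_contra h4; push Not at h4; exact hx ⟨h3, h4⟩
        constructor <;> linarith
  refine (measure_mono h).trans ((measure_union_le _ _).trans ?_)
  have h0 : 0 ≤ |p.1| * |t - s| := by positivity
  rw [Real.volume_Icc, Real.volume_Icc, ← ENNReal.ofReal_add (by linarith) (by linarith)]
  apply ENNReal.ofReal_le_ofReal
  linarith

lemma volume_cfg_symmDiff (C : Finset (ℝ × ℝ)) (s t : ℝ) :
    volume (symmDiff (cfg C s) (cfg C t)) ≤
      ENNReal.ofReal ((∑ p ∈ C, 4 * |p.1|) * |t - s|) := by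
  have h : symmDiff (cfg C s) (cfg C t) ⊆ ⋃ p ∈ C, symmDiff (seg p s) (seg p t) := by
    intro x hx
    simp only [cfg, mem_symmDiff, mem_iUnion, exists_prop, not_exists, not_and] at hx ⊢
    rcases hx with ⟨⟨p, hp, hx⟩, h⟩ | ⟨⟨p, hp, hx⟩, h⟩
    · exact ⟨p, hp, Or.inl ⟨hx, h p hp⟩⟩
    · exact ⟨p, hp, Or.inr ⟨hx, h p hp⟩⟩
  refine (measure_mono h).trans ((measure_biUnion_finset_le _ _).trans ?_)
  rw [Finset.sum_mul, ENNReal.ofReal_sum_of_nonneg fun p _ => by positivity]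
  exact Finset.sum_le_sum fun p _ => volume_seg_symmDiff p s t

lemma PFree.lipschitz {P : ℝ → Set ℝ} (hP : PFree P 1) :
    ∃ K : ℝ, 0 ≤ K ∧ ∀ s ∈ Icc (0 : ℝ) 1, ∀ t ∈ Icc (0 : ℝ) 1, s ≤ t →
      volume (symmDiff (P s) (P t)) ≤ ENNReal.ofReal (K * (t - s)) := by
  obtain ⟨S, hS⟩ := hP
  refine propagate (R := fun a b => ∃ K : ℝ, 0 ≤ K ∧ ∀ s ∈ Icc a b, ∀ t ∈ Icc a b, s ≤ t →
      volume (symmDiff (P s) (P t)) ≤ ENNReal.ofReal (K * (t - s))) (B := 1) S ?_ ?_ 0 1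
      le_rfl one_pos le_rfl
  · intro a b h1 h2 h3 h4
    obtain ⟨C, hC, hPC⟩ := hS a b h1 h2 h3 h4
    refine ⟨∑ p ∈ C, 4 * |p.1|, Finset.sum_nonneg fun p _ => by positivity, ?_⟩
    intro s hs t ht hst
    rw [hPC s hs, hPC t ht]
    have := volume_cfg_symmDiff C s t
    rwa [abs_of_nonneg (by linarith)] at this
  · rintro a b c hab hbc ⟨K, hK, h⟩ ⟨K', hK', h'⟩
    refine ⟨K + K', by positivity, fun s hs t ht hst => ?_⟩
    rcases le_total t b with htb | htb
    · refine (h s ⟨hs.1, hst.trans htb⟩ t ⟨ht.1, htb⟩ hst).trans (ENNReal.ofReal_le_ofReal ?_)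
      nlinarith
    rcases le_total b s with hbs | hbs
    · refine (h' s ⟨hbs, hs.2⟩ t ⟨htb, ht.2⟩ hst).trans (ENNReal.ofReal_le_ofReal ?_)
      nlinarith
    refine (measure_symmDiff_le (P s) (P b) (P t)).trans ((add_le_add (h s ⟨hs.1, hbs⟩ b ⟨hab.le, le_rfl⟩ hbs)
      (h' b ⟨le_rfl, hbc.le⟩ t ⟨htb, ht.2⟩ htb)).trans ?_)
    rw [← ENNReal.ofReal_add (mul_nonneg hK (by linarith)) (mul_nonneg hK' (by linarith))]
    apply ENNReal.ofReal_le_ofReal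
    nlinarith

lemma PFree.volume_eq {P : ℝ → Set ℝ} (hP : PFree P 1) {l : ℝ} (hl : l ∈ Icc (0 : ℝ) 1) :
    volume (P l) = volume (P 1) := by
  obtain ⟨S, hS⟩ := hP
  rcases hl.2.eq_or_lt with rfl | hl1
  · rfl
  refine propagate (R := fun a b => volume (P a) = volume (P b)) (B := 1) S ?_
    (fun a b c _ _ h1 h2 => h1.trans h2) l 1 hl.1 hl1 le_rfl
  intro a b h1 h2 h3 h4
  obtain ⟨C, hC, hPC⟩ := hS a b h1 h2 h3 h4
  rw [hPC a ⟨le_rfl, h2.le⟩, hPC b ⟨h2.le, le_rfl⟩, volume_cfg hC, volume_cfg (hC.mono h2.le)]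

lemma PFree.measurable {P : ℝ → Set ℝ} (hP : PFree P 1) {l : ℝ} (hl : l ∈ Icc (0 : ℝ) 1) :
    MeasurableSet (P l) := by
  obtain ⟨S, hS⟩ := hP
  refine (propagate (R := fun a b => ∀ l ∈ Icc a b, MeasurableSet (P l)) (B := 1) S ?_
    ?_ 0 1 le_rfl one_pos le_rfl) l hl
  · intro a b h1 h2 h3 h4 l hl
    obtain ⟨C, hC, hPC⟩ := hS a b h1 h2 h3 h4
    rw [hPC l hl]
    exact measurableSet_cfg C l
  · intro a b c hab hbc h1 h2 l hl
    rcases le_total l b with h | h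
    · exact h1 l ⟨hl.1, h⟩
    · exact h2 l ⟨h, hl.2⟩

/-- At scale `0` all intervals have merged into a single one centred at the origin. -/
lemma PFree.zero {P : ℝ → Set ℝ} (hP : PFree P 1) :
    ∃ r : ℝ, 0 ≤ r ∧ P 0 = Ico (-r) r := by
  obtain ⟨S, hS⟩ := hP
  refine propagate (R := fun a _ => a = 0 → ∃ r : ℝ, 0 ≤ r ∧ P a = Ico (-r) r) (B := 1) S ?_
    (fun a b c _ _ h1 _ => h1) 0 1 le_rfl one_pos le_rfl rfl
  rintro a b h1 h2 h3 h4 rfl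
  obtain ⟨C, hC, hPC⟩ := hS _ b h1 h2 h3 h4
  rw [hPC 0 ⟨le_rfl, h2.le⟩]
  rcases C.eq_empty_or_nonempty with rfl | ⟨p, hp⟩
  · exact ⟨0, le_rfl, by simp [cfg]⟩
  · have hCp : C = {p} := by
      refine Finset.eq_singleton_iff_unique_mem.2 ⟨hp, fun q hq => ?_⟩
      by_contra hqp
      have h5 := hC.2 q hq p hp hqp
      have h6 := hC.1 q hq
      have h7 := hC.1 p hp
      linarith
    refine ⟨p.2 / 2, by have := hC.1 p hp; linarith, ?_⟩
    simp [hCp, cfg, seg]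

/-- `U` is a finite union of half-open intervals. -/
def FU (U : Set ℝ) : Prop := ∃ S : Finset (ℝ × ℝ), U = ⋃ p ∈ S, Ico p.1 p.2

lemma FU.empty : FU ∅ := ⟨∅, by simp⟩

lemma FU.Ico (a b : ℝ) : FU (Ico a b) := ⟨{(a, b)}, by simp⟩

lemma FU.union {U V : Set ℝ} (hU : FU U) (hV : FU V) : FU (U ∪ V) := by
  classical
  obtain ⟨S, rfl⟩ := hU
  obtain ⟨S', rfl⟩ := hV
  exact ⟨S ∪ S', by rw [Finset.set_biUnion_union]⟩

lemma FU.biUnion {ι : Type*} (s : Finset ι) {f : ι → Set ℝ} (h : ∀ i ∈ s, FU (f i)) :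
    FU (⋃ i ∈ s, f i) := by
  classical
  induction s using Finset.induction_on with
  | empty => simpa using FU.empty
  | insert a s _ ih =>
    rw [Finset.set_biUnion_insert]
    exact (h a (Finset.mem_insert_self _ _)).union
      (ih fun i hi => h i (Finset.mem_insert_of_mem hi))

lemma FU.diff_Ico {U : Set ℝ} (hU : FU U) (c d : ℝ) : FU (U \ Set.Ico c d) := by
  obtain ⟨S, rfl⟩ := hU
  have : (⋃ p ∈ S, Set.Ico p.1 p.2) \ Set.Ico c d =
      ⋃ p ∈ S, (Set.Ico p.1 (min p.2 c) ∪ Set.Ico (max p.1 d) p.2) := by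
    ext x
    simp only [mem_sdiff, mem_iUnion, mem_Ico, exists_prop, mem_union, lt_min_iff, max_le_iff,
      not_and, not_lt]
    constructor
    · rintro ⟨⟨p, hp, h1, h2⟩, h⟩
      refine ⟨p, hp, ?_⟩
      rcases lt_or_ge x c with h3 | h3
      · exact Or.inl ⟨h1, h2, h3⟩
      · exact Or.inr ⟨⟨h1, h h3⟩, h2⟩
    · rintro ⟨p, hp, ⟨h1, h2, h3⟩ | ⟨⟨h1, h3⟩, h2⟩⟩
      · exact ⟨⟨p, hp, h1, h2⟩, fun h => absurd h3 (not_lt.2 h)⟩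
      · exact ⟨⟨p, hp, h1, h2⟩, fun _ => h3⟩
  rw [this]
  exact FU.biUnion S fun p _ => (FU.Ico _ _).union (FU.Ico _ _)

lemma FU.diff {U V : Set ℝ} (hU : FU U) (hV : FU V) : FU (U \ V) := by
  classical
  obtain ⟨S, rfl⟩ := hV
  induction S using Finset.induction_on with
  | empty => simpa using hU
  | insert a s _ ih =>
    rw [Finset.set_biUnion_insert, union_comm, ← sdiff_sdiff]
    exact ih.diff_Ico _ _

lemma FU.inter {U V : Set ℝ} (hU : FU U) (hV : FU V) : FU (U ∩ V) := by
  rw [← sdiff_sdiff_right_self]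
  exact hU.diff (hU.diff hV)

lemma FU.measurableSet {U : Set ℝ} (hU : FU U) : MeasurableSet U := by
  obtain ⟨S, rfl⟩ := hU
  exact Finset.measurableSet_biUnion _ fun p _ => measurableSet_Ico

lemma FU.volume_ne_top {U : Set ℝ} (hU : FU U) : volume U ≠ ⊤ := by
  obtain ⟨S, rfl⟩ := hU
  refine ((measure_biUnion_finset_le S _).trans_lt ?_).ne
  exact ENNReal.sum_lt_top.2 fun p _ => by simp

lemma FU.exists_path {U : Set ℝ} (hU : FU U) : ∃ P, PFree P 1 ∧ P 1 = U := by
  classical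
  obtain ⟨S, rfl⟩ := hU
  obtain ⟨P, hP, h⟩ := _root_.exists_path _ 1 one_pos
    ((S.filter fun p => p.1 < p.2).image fun p => ((p.1 + p.2) / 2, p.2 - p.1)) le_rfl (by
      intro p hp
      obtain ⟨q, hq, rfl⟩ := Finset.mem_image.1 hp
      have := (Finset.mem_filter.1 hq).2
      simpa using this)
  refine ⟨P, hP, h.trans ?_⟩
  ext x
  simp only [cfg, seg, Finset.mem_image, Finset.mem_filter, mem_iUnion, exists_prop, mem_Ico]
  constructor
  · rintro ⟨_, ⟨q, ⟨hq, _⟩, rfl⟩, h1, h2⟩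
    refine ⟨q, hq, ?_, ?_⟩ <;> simp only at h1 h2 <;> linarith
  · rintro ⟨q, hq, h1, h2⟩
    exact ⟨_, ⟨q, ⟨hq, h1.trans_lt h2⟩, rfl⟩, by simp only; linarith, by simp only; linarith⟩

/-- The scale at time `t`: it equals `1 - t` on `[0, 1]` and is constant outside. -/
def scl (t : ℝ) : ℝ := max 0 (min 1 (1 - t))

lemma scl_mem (t : ℝ) : scl t ∈ Icc (0 : ℝ) 1 :=
  ⟨le_max_left _ _, max_le zero_le_one (min_le_left _ _)⟩

lemma scl_of_nonpos {t : ℝ} (ht : t ≤ 0) : scl t = 1 := by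
  rw [scl, min_eq_left (by linarith), max_eq_right zero_le_one]

lemma scl_of_one_le {t : ℝ} (ht : 1 ≤ t) : scl t = 0 := by
  rw [scl, max_eq_left]
  exact (min_le_right _ _).trans (by linarith)

lemma scl_anti {s t : ℝ} (h : s ≤ t) : scl t ≤ scl s := by
  unfold scl; gcongr

lemma scl_sub_le {s t : ℝ} (h : s ≤ t) : scl s - scl t ≤ t - s := by
  unfold scl
  rcases max_cases 0 (min 1 (1 - t)) with h1 | h1 <;>
  rcases max_cases 0 (min 1 (1 - s)) with h2 | h2 <;>
  rcases min_cases 1 (1 - t) with h3 | h3 <;>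
  rcases min_cases 1 (1 - s) with h4 | h4 <;> linarith

open Classical in
/-- The sticky flow at time `t` of a finite union of intervals. It is the identity on other sets,
a value that plays no role. -/
def phi (U : Set ℝ) (t : ℝ) : Set ℝ :=
  if h : FU U then h.exists_path.choose (scl t) else U

lemma phi_spec {U : Set ℝ} (hU : FU U) :
    ∃ P, PFree P 1 ∧ P 1 = U ∧ ∀ t, phi U t = P (scl t) :=
  ⟨hU.exists_path.choose, hU.exists_path.choose_spec.1, hU.exists_path.choose_spec.2,
    fun t => by rw [phi, dif_pos hU]⟩

lemma phi_measurable {U : Set ℝ} (hU : FU U) (t : ℝ) : MeasurableSet (phi U t) := by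
  obtain ⟨P, hP, -, h⟩ := phi_spec hU
  rw [h]; exact hP.measurable (scl_mem t)

lemma volume_phi {U : Set ℝ} (hU : FU U) (t : ℝ) : volume (phi U t) = volume U := by
  obtain ⟨P, hP, h1, h⟩ := phi_spec hU
  rw [h, hP.volume_eq (scl_mem t), h1]

lemma phi_of_nonpos {U : Set ℝ} (hU : FU U) {t : ℝ} (ht : t ≤ 0) : phi U t = U := by
  obtain ⟨P, hP, h1, h⟩ := phi_spec hU
  rw [h, scl_of_nonpos ht, h1]

lemma phi_mono {U V : Set ℝ} (hU : FU U) (hV : FU V) (hUV : U ⊆ V) (t : ℝ) :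
    phi U t ⊆ phi V t := by
  obtain ⟨P, hP, h1, h⟩ := phi_spec hU
  obtain ⟨Q, hQ, h2, h'⟩ := phi_spec hV
  rw [h, h']
  exact hP.mono hQ (by rwa [h1, h2]) (scl_mem t)

lemma phi_of_one_le {U : Set ℝ} (hU : FU U) {t : ℝ} (ht : 1 ≤ t) :
    ∃ r : ℝ, 0 ≤ r ∧ phi U t = Ico (-r) r := by
  obtain ⟨P, hP, h1, h⟩ := phi_spec hU
  rw [h, scl_of_one_le ht]
  exact hP.zero

/-- Centred intervals are fixed by the flow. -/
lemma phi_Ico {r : ℝ} (hr : 0 ≤ r) (t : ℝ) : phi (Ico (-r) r) t = Ico (-r) r := by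
  have hc : PFree (fun _ => Ico (-r) r) 1 := by
    refine ⟨∅, fun a b _ _ _ _ => ?_⟩
    rcases hr.eq_or_lt with rfl | hr
    · exact ⟨∅, ⟨by simp, by simp⟩, fun l _ => by simp [cfg]⟩
    · exact ⟨{(0, 2 * r)}, ⟨by simpa using hr, by simp⟩, fun l _ => by simp [cfg, seg]⟩
  obtain ⟨P, hP, h1, h⟩ := phi_spec (FU.Ico (-r) r)
  rw [h]
  exact (hP.mono hc h1.subset (scl_mem t)).antisymm (hc.mono hP h1.superset (scl_mem t))

lemma phi_lipschitz {U : Set ℝ} (hU : FU U) : ∃ K : ℝ, 0 ≤ K ∧ ∀ s t,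
    volume (symmDiff (phi U s) (phi U t)) ≤ ENNReal.ofReal (K * |t - s|) := by
  obtain ⟨P, hP, -, h⟩ := phi_spec hU
  obtain ⟨K, hK, hL⟩ := hP.lipschitz
  have key : ∀ s t, s ≤ t → volume (symmDiff (phi U s) (phi U t)) ≤
      ENNReal.ofReal (K * |t - s|) := by
    intro s t hst
    rw [symmDiff_comm, h, h, abs_of_nonneg (by linarith)]
    exact (hL _ (scl_mem t) _ (scl_mem s) (scl_anti hst)).trans
      (ENNReal.ofReal_le_ofReal (mul_le_mul_of_nonneg_left (scl_sub_le hst) hK))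
  refine ⟨K, hK, fun s t => ?_⟩
  rcases le_total s t with h1 | h1
  · exact key s t h1
  · rw [symmDiff_comm, abs_sub_comm]; exact key t s h1

/-- The flow preserves measure and inclusions, so that `φ (U ∩ V)` is contained in
`φ U ∩ φ V` and has the measure of `U ∩ V`. -/
lemma volume_inter_le_phi {U V : Set ℝ} (hU : FU U) (hV : FU V) (t : ℝ) :
    volume (U ∩ V) ≤ volume (phi U t ∩ phi V t) := by
  rw [← volume_phi (hU.inter hV) t]
  exact measure_mono (subset_inter (phi_mono (hU.inter hV) hU inter_subset_left t)
    (phi_mono (hU.inter hV) hV inter_subset_right t))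

lemma volume_inter_Ico_le_phi {U : Set ℝ} (hU : FU U) {r : ℝ} (hr : 0 ≤ r) (t : ℝ) :
    volume (U ∩ Ico (-r) r) ≤ volume (phi U t ∩ Ico (-r) r) := by
  simpa [phi_Ico hr t] using volume_inter_le_phi hU (FU.Ico (-r) r) t

lemma min_le_volume_phi_inter_Ico {U : Set ℝ} (hU : FU U) (r : ℝ) {t : ℝ}
    (ht : 1 ≤ t) : min (volume U) (volume (Ico (-r) r)) ≤ volume (phi U t ∩ Ico (-r) r) := by
  rw [← volume_phi hU t]
  obtain ⟨s, hs, h⟩ := phi_of_one_le hU ht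
  rw [h]
  rcases le_total r s with h1 | h1
  · rw [inter_eq_self_of_subset_right (Ico_subset_Ico (by linarith) h1)]
    exact min_le_right _ _
  · rw [inter_eq_self_of_subset_left (Ico_subset_Ico (by linarith) h1)]
    exact min_le_left _ _

/-! ### Monotonicity of the trilinear form along the one-dimensional flow -/

/-- The trilinear form `T` on a measured group, as the extended nonnegative measure of the set of
pairs `(x, y)` with `x ∈ A`, `y ∈ B`, `-x - y ∈ C`. -/
def TT {G : Type*} [MeasurableSpace G] [AddCommGroup G] (μ : Measure G) (A B C : Set G) :
    ENNReal :=
  (μ.prod μ) {p | p.1 ∈ A ∧ p.2 ∈ B ∧ -p.1 - p.2 ∈ C}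

lemma lintegral_Ico_shift (g : ℝ → ENNReal) (a b c : ℝ) :
    ∫⁻ z in Ico (a + c) (b + c), g z = ∫⁻ z in Ico a b, g (z + c) := by
  rw [← lintegral_indicator measurableSet_Ico, ← lintegral_indicator measurableSet_Ico,
    ← lintegral_add_right_eq_self _ c]
  congr 1
  ext z
  simp only [indicator, mem_Ico, add_le_add_iff_right, add_lt_add_iff_right]

lemma lintegral_Ico_neg (g : ℝ → ENNReal) (hg : ∀ z, g (-z) = g z) (a b : ℝ) :
    ∫⁻ z in Ico (-b) (-a), g z = ∫⁻ z in Ico a b, g z := by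
  rw [setLIntegral_congr (Ico_ae_eq_Ioc (a := a) (b := b)), ← lintegral_indicator measurableSet_Ico,
    ← lintegral_indicator measurableSet_Ioc, ← lintegral_neg_eq_self]
  congr 1
  ext z
  simp only [indicator, mem_Ico, mem_Ioc, neg_le_neg_iff, neg_lt_neg_iff, hg, and_comm]

/-- The integral of a symmetric decreasing function over a window of fixed length increases when
the centre of the window approaches the origin. -/
lemma window_le {g : ℝ → ENNReal} (hg : ∀ w z, |w| ≤ |z| → g z ≤ g w)
    {h u v : ℝ} (hh : 0 ≤ h) (huv : |u| ≤ |v|) :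
    ∫⁻ z in Ico (v - h) (v + h), g z ≤ ∫⁻ z in Ico (u - h) (u + h), g z := by
  have heven : ∀ z, g (-z) = g z := fun z =>
    le_antisymm (hg _ _ (by simp)) (hg _ _ (by simp))
  have habs : ∀ u, ∫⁻ z in Ico (u - h) (u + h), g z = ∫⁻ z in Ico (|u| - h) (|u| + h), g z := by
    intro u
    rcases abs_choice u with h1 | h1 <;> rw [h1]
    rw [← lintegral_Ico_neg g heven]
    congr 3 <;> ring
  rw [habs u, habs v]
  have hu := abs_nonneg u
  generalize |u| = u at *
  generalize |v| = v at *
  rcases le_total (v - h) (u + h) with h1 | h1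
  · rw [← Ico_union_Ico_eq_Ico h1 (by linarith : u + h ≤ v + h),
      ← Ico_union_Ico_eq_Ico (by linarith : u - h ≤ v - h) h1, union_comm,
      lintegral_union measurableSet_Ico, lintegral_union measurableSet_Ico]
    · gcongr ?_ + _
      have e1 : u + h = (u - h) + 2 * h := by ring
      have e2 : v + h = (v - h) + 2 * h := by ring
      rw [e1, e2, lintegral_Ico_shift]
      refine setLIntegral_mono' measurableSet_Ico fun z hz => hg _ _ ?_
      rw [← sq_le_sq]
      nlinarith [hz.1]
    · rw [Set.disjoint_left]; rintro x hx hy; exact absurd hx.2 (not_lt.2 hy.1)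
    · rw [Set.disjoint_left]; rintro x hx hy; exact absurd hy.2 (not_lt.2 hx.1)
  · have e1 : v - h = (u - h) + (v - u) := by ring
    have e2 : v + h = (u + h) + (v - u) := by ring
    rw [e1, e2, lintegral_Ico_shift]
    refine setLIntegral_mono' measurableSet_Ico fun z hz => hg _ _ ?_
    rw [← sq_le_sq]
    nlinarith [hz.1]

lemma volume_Ico_inter_Ioc (a b c d : ℝ) :
    volume (Ico a b ∩ Ioc c d) = ENNReal.ofReal (min b d - max a c) := by
  have : (Ico a b ∩ Ioc c d : Set ℝ) =ᵐ[volume] (Icc a b ∩ Icc c d : Set ℝ) :=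
    Ico_ae_eq_Icc.inter Ioc_ae_eq_Icc
  rw [measure_congr this, Icc_inter_Icc, Real.volume_Icc]

/-- The length of the intersection of two intervals of half-lengths `m` and `n` whose centres are
at distance `|w|`. -/
def overlap (m n w : ℝ) : ENNReal := ENNReal.ofReal (min m (n - w) + min m (n + w))

lemma overlap_anti (m n : ℝ) (w z : ℝ) (h : |w| ≤ |z|) : overlap m n z ≤ overlap m n w := by
  apply ENNReal.ofReal_le_ofReal
  rcases abs_cases w with h1 | h1 <;> rcases abs_cases z with h2 | h2 <;>
  rcases min_cases m (n - w) with h3 | h3 <;> rcases min_cases m (n + w) with h4 | h4 <;>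
  rcases min_cases m (n - z) with h5 | h5 <;> rcases min_cases m (n + z) with h6 | h6 <;>
  linarith

/-- For three intervals, `T` is the integral of a symmetric decreasing function over a window
centred at the sum of the three centres. -/
lemma TT_seg (p q r : ℝ × ℝ) (l : ℝ) :
    TT volume (seg p l) (seg q l) (seg r l) =
      ∫⁻ z in Ico (l * (p.1 + q.1 + r.1) - p.2 / 2) (l * (p.1 + q.1 + r.1) + p.2 / 2),
        overlap (q.2 / 2) (r.2 / 2) z := by
  have hm : MeasurableSet {x : ℝ × ℝ | x.1 ∈ seg p l ∧ x.2 ∈ seg q l ∧ -x.1 - x.2 ∈ seg r l} :=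
    (measurable_fst (measurableSet_seg p l)).inter
      ((measurable_snd (measurableSet_seg q l)).inter
        ((measurable_fst.neg.sub measurable_snd) (measurableSet_seg r l)))
  have e : ∀ s : ℝ, l * (p.1 + q.1 + r.1) + s = (l * p.1 + s) + l * (q.1 + r.1) := by
    intro s; ring
  rw [TT, Measure.prod_apply hm, sub_eq_add_neg, e, e, lintegral_Ico_shift,
    ← lintegral_indicator measurableSet_Ico]
  congr 1
  ext x
  by_cases hx : x ∈ seg p l
  · have hx' : x ∈ Ico (l * p.1 + -(p.2 / 2)) (l * p.1 + p.2 / 2) := by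
      rw [← sub_eq_add_neg]; exact hx
    rw [indicator_of_mem hx']
    have : (Prod.mk x ⁻¹' {x : ℝ × ℝ | x.1 ∈ seg p l ∧ x.2 ∈ seg q l ∧ -x.1 - x.2 ∈ seg r l}) =
        Ico (l * q.1 - q.2 / 2) (l * q.1 + q.2 / 2) ∩
          Ioc (-x - (l * r.1 + r.2 / 2)) (-x - (l * r.1 - r.2 / 2)) := by
      ext y
      simp only [mem_preimage, mem_ofPred_eq, hx, true_and, mem_inter_iff]
      simp only [seg, mem_Ico, mem_Ioc]
      constructor <;> rintro ⟨⟨h1, h2⟩, h3, h4⟩ <;> refine ⟨⟨?_, ?_⟩, ?_, ?_⟩ <;> linarith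
    rw [this, volume_Ico_inter_Ioc, overlap]
    congr 1
    rw [sub_eq_add_neg, ← min_neg_neg]
    have e1 : l * q.1 + q.2 / 2 = q.2 / 2 + l * q.1 := by ring
    have e2 : -x - (l * r.1 - r.2 / 2) = (r.2 / 2 - (x + l * (q.1 + r.1))) + l * q.1 := by ring
    have e3 : -(l * q.1 - q.2 / 2) = q.2 / 2 + -(l * q.1) := by ring
    have e4 : -(-x - (l * r.1 + r.2 / 2)) = (r.2 / 2 + (x + l * (q.1 + r.1))) + -(l * q.1) := by
      ring
    rw [e1, e2, e3, e4, min_add_add_right, min_add_add_right]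
    ring
  · have hx' : x ∉ Ico (l * p.1 + -(p.2 / 2)) (l * p.1 + p.2 / 2) := by
      rw [← sub_eq_add_neg]; exact hx
    rw [indicator_of_notMem hx']
    simp [preimage, hx]

/-- For three intervals, `T` increases as the scale decreases. -/
lemma TT_seg_anti {p q r : ℝ × ℝ} (hp : 0 < p.2) {a b : ℝ} (ha : 0 ≤ a) (hab : a ≤ b) :
    TT volume (seg p b) (seg q b) (seg r b) ≤ TT volume (seg p a) (seg q a) (seg r a) := by
  rw [TT_seg, TT_seg]
  refine window_le (overlap_anti _ _) (by linarith) ?_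
  rw [abs_mul, abs_mul, abs_of_nonneg ha, abs_of_nonneg (ha.trans hab)]
  gcongr

/-- Trilinearity of `T` over separated configurations. -/
lemma TT_cfg {C D E : Finset (ℝ × ℝ)} {l : ℝ} (hC : WSep C l) (hD : WSep D l) (hE : WSep E l) :
    TT volume (cfg C l) (cfg D l) (cfg E l) =
      ∑ x ∈ C ×ˢ D ×ˢ E, TT volume (seg x.1 l) (seg x.2.1 l) (seg x.2.2 l) := by
  have : {p : ℝ × ℝ | p.1 ∈ cfg C l ∧ p.2 ∈ cfg D l ∧ -p.1 - p.2 ∈ cfg E l} =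
      ⋃ x ∈ C ×ˢ D ×ˢ E,
        {p : ℝ × ℝ | p.1 ∈ seg x.1 l ∧ p.2 ∈ seg x.2.1 l ∧ -p.1 - p.2 ∈ seg x.2.2 l} := by
    ext p
    simp only [cfg, mem_iUnion, exists_prop, mem_ofPred_eq, Finset.mem_product]
    constructor
    · rintro ⟨⟨x, hx, hx'⟩, ⟨y, hy, hy'⟩, ⟨z, hz, hz'⟩⟩
      exact ⟨(x, y, z), ⟨hx, hy, hz⟩, hx', hy', hz'⟩
    · rintro ⟨⟨x, y, z⟩, ⟨hx, hy, hz⟩, hx', hy', hz'⟩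
      exact ⟨⟨x, hx, hx'⟩, ⟨y, hy, hy'⟩, ⟨z, hz, hz'⟩⟩
  rw [TT, this, measure_biUnion_finset]
  · rfl
  · rintro ⟨x, y, z⟩ hx ⟨x', y', z'⟩ hx' hne
    simp only [Finset.coe_product, mem_prod, Finset.mem_coe] at hx hx'
    simp only [Function.onFun, Set.disjoint_left, mem_ofPred_eq]
    rintro p ⟨h1, h2, h3⟩ ⟨h1', h2', h3'⟩
    apply hne
    have e1 : x = x' := by
      by_contra h
      exact Set.disjoint_left.1 (seg_disjoint hC hx.1 hx'.1 h) h1 h1'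
    have e2 : y = y' := by
      by_contra h
      exact Set.disjoint_left.1 (seg_disjoint hD hx.2.1 hx'.2.1 h) h2 h2'
    have e3 : z = z' := by
      by_contra h
      exact Set.disjoint_left.1 (seg_disjoint hE hx.2.2 hx'.2.2 h) h3 h3'
    rw [e1, e2, e3]
  · intro x _
    exact (measurable_fst (measurableSet_seg _ l)).inter
      ((measurable_snd (measurableSet_seg _ l)).inter
        ((measurable_fst.neg.sub measurable_snd) (measurableSet_seg _ l)))

/-- `T` is nondecreasing along the sticky flow: between collisions it is the sum of the
contributions of triples of intervals, each of which is nondecreasing. -/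
lemma TT_phi_mono {U V W : Set ℝ} (hU : FU U) (hV : FU V) (hW : FU W) {s t : ℝ} (hst : s ≤ t) :
    TT volume (phi U s) (phi V s) (phi W s) ≤ TT volume (phi U t) (phi V t) (phi W t) := by
  classical
  obtain ⟨P, ⟨S, hS⟩, -, hP⟩ := phi_spec hU
  obtain ⟨Q, ⟨S', hS'⟩, -, hQ⟩ := phi_spec hV
  obtain ⟨R, ⟨S'', hS''⟩, -, hR⟩ := phi_spec hW
  simp only [hP, hQ, hR]
  rcases (scl_anti hst).eq_or_lt with h | h
  · rw [h]
  refine propagate (R := fun a b => TT volume (P b) (Q b) (R b) ≤ TT volume (P a) (Q a) (R a))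
    (B := 1) (S ∪ (S' ∪ S'')) ?_ (fun a b c _ _ h1 h2 => h2.trans h1) _ _ (scl_mem t).1 h
    (scl_mem s).2
  intro a b h1 h2 h3 h4
  obtain ⟨C, hC, hPC⟩ := hS a b h1 h2 h3 fun s hs => h4 s (by simp [hs])
  obtain ⟨D, hD, hQD⟩ := hS' a b h1 h2 h3 fun s hs => h4 s (by simp [hs])
  obtain ⟨E, hE, hRE⟩ := hS'' a b h1 h2 h3 fun s hs => h4 s (by simp [hs])
  have ha : a ∈ Icc a b := ⟨le_rfl, h2.le⟩
  have hb : b ∈ Icc a b := ⟨h2.le, le_rfl⟩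
  rw [hPC a ha, hPC b hb, hQD a ha, hQD b hb, hRE a ha, hRE b hb, TT_cfg hC hD hE,
    TT_cfg (hC.mono h2.le) (hD.mono h2.le) (hE.mono h2.le)]
  exact Finset.sum_le_sum fun x hx =>
    TT_seg_anti (hC.1 _ (Finset.mem_product.1 hx).1) h1 h2.le

/-! ### The fibrewise flow on elementary subsets of `ℝ × X` -/

section Fiber

variable {X : Type*}

/-- The fibre over `x` of a subset of `ℝ × X`. -/
def fib (E : Set (ℝ × X)) (x : X) : Set ℝ := {y | (y, x) ∈ E}

/-- The fibrewise sticky flow. -/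
def Phi (E : Set (ℝ × X)) (t : ℝ) : Set (ℝ × X) := {p | p.1 ∈ phi (fib E p.2) t}

lemma fib_Phi (E : Set (ℝ × X)) (t : ℝ) (x : X) : fib (Phi E t) x = phi (fib E x) t := rfl

variable [MeasurableSpace X]

/-- Elementary sets: finitely many distinct fibres, each a finite union of half-open intervals,
each attained on a measurable set of base points. -/
structure ElemSet (E : Set (ℝ × X)) : Prop where
  fin : (range (fib E)).Finite
  fu : ∀ x, FU (fib E x)
  meas : ∀ U, MeasurableSet {x | fib E x = U}

lemma fib_measurable {E : Set (ℝ × X)} (hE : MeasurableSet E) (x : X) :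
    MeasurableSet (fib E x) := measurable_prodMk_right hE

lemma prod_fib {ν : Measure X} [SFinite ν] {E : Set (ℝ × X)} (hE : MeasurableSet E) :
    ((volume : Measure ℝ).prod ν) E = ∫⁻ x, volume (fib E x) ∂ν := Measure.prod_apply_symm hE

lemma measurable_volume_fib {E : Set (ℝ × X)} (hE : MeasurableSet E) :
    Measurable fun x => volume (fib E x) := measurable_measure_prodMk_right hE

lemma ElemSet.measurable_Phi {E : Set (ℝ × X)} (hE : ElemSet E) (t : ℝ) : MeasurableSet (Phi E t) := by
  have : Phi E t = ⋃ U ∈ range (fib E), (phi U t) ×ˢ {x | fib E x = U} := by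
    ext ⟨y, x⟩
    simp only [Phi, mem_ofPred_eq, mem_iUnion, mem_prod, exists_prop]
    constructor
    · intro h; exact ⟨_, mem_range_self x, h, rfl⟩
    · rintro ⟨U, -, h, rfl⟩; exact h
  rw [this]
  refine hE.fin.measurableSet_biUnion ?_
  rintro _ ⟨x, rfl⟩
  exact (phi_measurable (hE.fu x) t).prod (hE.meas _)

lemma ElemSet.Phi_nonpos {E : Set (ℝ × X)} (hE : ElemSet E) {t : ℝ} (ht : t ≤ 0) : Phi E t = E := by
  ext ⟨y, x⟩
  simp only [Phi, mem_ofPred_eq, phi_of_nonpos (hE.fu x) ht]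
  rfl

lemma ElemSet.measurableSet {E : Set (ℝ × X)} (hE : ElemSet E) : MeasurableSet E := by
  have := hE.measurable_Phi 0
  rwa [hE.Phi_nonpos le_rfl] at this

/-- Elementary sets are stable under every fibrewise binary operation that preserves finite
unions of intervals. -/
lemma ElemSet.op {E F G : Set (ℝ × X)} (hE : ElemSet E) (hF : ElemSet F) (f : Set ℝ → Set ℝ → Set ℝ)
    (hf : ∀ U V, FU U → FU V → FU (f U V)) (hG : ∀ x, fib G x = f (fib E x) (fib F x)) :
    ElemSet G := by
  refine ⟨(hE.fin.image2 f hF.fin).subset ?_, fun x => ?_, fun U => ?_⟩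
  · rintro _ ⟨x, rfl⟩
    exact ⟨_, mem_range_self x, _, mem_range_self x, (hG x).symm⟩
  · rw [hG]; exact hf _ _ (hE.fu x) (hF.fu x)
  · have : {x | fib G x = U} = ⋃ V ∈ range (fib E), ⋃ W ∈ range (fib F),
        if f V W = U then {x | fib E x = V} ∩ {x | fib F x = W} else ∅ := by
      ext x
      simp only [mem_ofPred_eq, mem_iUnion, exists_prop, hG]
      constructor
      · intro h
        exact ⟨_, mem_range_self x, _, mem_range_self x, by simp [h]⟩
      · rintro ⟨V, -, W, -, h⟩
        split_ifs at h with h1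
        · obtain ⟨h2, h3⟩ := h
          rw [mem_ofPred_eq] at h2 h3
          rw [h2, h3, h1]
        · exact h.elim
    rw [this]
    refine hE.fin.measurableSet_biUnion fun V _ => hF.fin.measurableSet_biUnion fun W _ => ?_
    split_ifs
    · exact (hE.meas V).inter (hF.meas W)
    · exact MeasurableSet.empty

lemma ElemSet.prod {U : Set ℝ} (hU : FU U) {Q : Set X} (hQ : MeasurableSet Q) :
    ElemSet (U ×ˢ Q) := by
  classical
  have h : ∀ x, fib (U ×ˢ Q) x = if x ∈ Q then U else ∅ := by
    intro x; ext y; by_cases hx : x ∈ Q <;> simp [fib, hx]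
  refine ⟨(Set.toFinite {U, ∅}).subset ?_, fun x => ?_, fun V => ?_⟩
  · rintro _ ⟨x, rfl⟩
    rw [h]; split_ifs <;> simp
  · rw [h]; split_ifs
    exacts [hU, FU.empty]
  · simp only [h]
    have : {x | (if x ∈ Q then U else ∅) = V} = (Q ∩ {_x | U = V}) ∪ (Qᶜ ∩ {_x | ∅ = V}) := by
      ext x; by_cases hx : x ∈ Q <;> simp [hx]
    rw [this]
    exact (hQ.inter (MeasurableSet.const _)).union (hQ.compl.inter (MeasurableSet.const _))

end Fiber

section FiberFlow

variable {X : Type*} [MeasurableSpace X] {ν : Measure X} [SFinite ν]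

lemma ElemSet.measure_Phi {E : Set (ℝ × X)} (hE : ElemSet E) (t : ℝ) :
    ((volume : Measure ℝ).prod ν) (Phi E t) = ((volume : Measure ℝ).prod ν) E := by
  rw [prod_fib (hE.measurable_Phi t), prod_fib hE.measurableSet]
  exact lintegral_congr fun x => volume_phi (hE.fu x) t

lemma ElemSet.measure_inter_le {E F : Set (ℝ × X)} (hE : ElemSet E) (hF : ElemSet F) (t : ℝ) :
    ((volume : Measure ℝ).prod ν) (E ∩ F) ≤ ((volume : Measure ℝ).prod ν) (Phi E t ∩ Phi F t) := by
  rw [prod_fib ((hE.measurable_Phi t).inter (hF.measurable_Phi t)),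
    prod_fib (hE.measurableSet.inter hF.measurableSet)]
  exact lintegral_mono fun x => volume_inter_le_phi (hE.fu x) (hF.fu x) t

/-- A measure preserving operation that increases intersections decreases symmetric differences. -/
lemma measure_symmDiff_le_of_inter_le {α : Type*} [MeasurableSpace α] {μ : Measure α}
    {E F E' F' : Set α} (hE : MeasurableSet E) (hF : MeasurableSet F)
    (hE' : MeasurableSet E') (hF' : MeasurableSet F') (hEt : μ E ≠ ⊤) (hFt : μ F ≠ ⊤)
    (h1 : μ E' = μ E) (h2 : μ F' = μ F) (h : μ (E ∩ F) ≤ μ (E' ∩ F')) :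
    μ (symmDiff E' F') ≤ μ (symmDiff E F) := by
  have aux : ∀ {A B A' B' : Set α}, MeasurableSet B → MeasurableSet B' → μ A ≠ ⊤ →
      μ A' = μ A → μ (A ∩ B) ≤ μ (A' ∩ B') → μ (A' \ B') ≤ μ (A \ B) := by
    intro A B A' B' hB hB' hA hAA h
    have e1 := measure_inter_add_sdiff (μ := μ) A hB
    have e2 := measure_inter_add_sdiff (μ := μ) A' hB'
    have hfin : μ (A' ∩ B') ≠ ⊤ := ne_top_of_le_ne_top (hAA ▸ hA) (measure_mono inter_subset_left)
    refine (ENNReal.add_le_add_iff_left hfin).1 ?_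
    rw [e2, hAA, ← e1]
    gcongr
  rw [measure_symmDiff_eq hE.nullMeasurableSet hF.nullMeasurableSet,
    measure_symmDiff_eq hE'.nullMeasurableSet hF'.nullMeasurableSet]
  have hcomm : μ (F ∩ E) ≤ μ (F' ∩ E') := by rwa [inter_comm F, inter_comm F']
  exact add_le_add (aux hF hF' hEt h1 h) (aux hE hE' hFt h2 hcomm)

/-- The fibrewise flow is a contraction for the distance `μ (E ∆ F)`; this allows its extension
by density. -/
lemma ElemSet.contraction {E F : Set (ℝ × X)} (hE : ElemSet E) (hF : ElemSet F)
    (hEt : ((volume : Measure ℝ).prod ν) E ≠ ⊤) (hFt : ((volume : Measure ℝ).prod ν) F ≠ ⊤) (t : ℝ) :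
    ((volume : Measure ℝ).prod ν) (symmDiff (Phi E t) (Phi F t)) ≤ ((volume : Measure ℝ).prod ν) (symmDiff E F) :=
  measure_symmDiff_le_of_inter_le hE.measurableSet hF.measurableSet (hE.measurable_Phi t)
    (hF.measurable_Phi t) hEt hFt (hE.measure_Phi t) (hF.measure_Phi t) (hE.measure_inter_le hF t)

lemma ElemSet.tendsto {E : Set (ℝ × X)} (hE : ElemSet E) (hEt : ((volume : Measure ℝ).prod ν) E ≠ ⊤) (t : ℝ) :
    Filter.Tendsto (fun s => ((volume : Measure ℝ).prod ν) (symmDiff (Phi E s) (Phi E t))) (nhds t) (nhds 0) := by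
  have hm : ∀ s, MeasurableSet (symmDiff (Phi E s) (Phi E t)) := fun s =>
    (hE.measurable_Phi s).symmDiff (hE.measurable_Phi t)
  simp_rw [fun s => prod_fib (ν := ν) (hm s)]
  rw [← lintegral_zero (μ := ν)]
  refine tendsto_lintegral_filter_of_dominated_convergence
    (fun x => volume (fib E x) + volume (fib E x)) ?_ ?_ ?_ ?_
  · exact Filter.Eventually.of_forall fun s => measurable_volume_fib (hm s)
  · refine Filter.Eventually.of_forall fun s => Filter.Eventually.of_forall fun x => ?_
    calc volume (fib (symmDiff (Phi E s) (Phi E t)) x)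
        ≤ volume (phi (fib E x) s ∪ phi (fib E x) t) := by
          refine measure_mono ?_
          exact symmDiff_le_sup (a := phi (fib E x) s) (b := phi (fib E x) t)
      _ ≤ _ := by
          refine (measure_union_le _ _).trans ?_
          rw [volume_phi (hE.fu x), volume_phi (hE.fu x)]
  · rw [lintegral_add_left (measurable_volume_fib hE.measurableSet), ← prod_fib hE.measurableSet]
    exact ENNReal.add_ne_top.2 ⟨hEt, hEt⟩
  · refine Filter.Eventually.of_forall fun x => ?_
    obtain ⟨K, -, hK⟩ := phi_lipschitz (hE.fu x)
    refine tendsto_of_tendsto_of_tendsto_of_le_of_le tendsto_const_nhds ?_ (fun _ => zero_le)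
      (fun s => hK s t)
    have : Continuous fun s : ℝ => ENNReal.ofReal (K * |t - s|) := 
      ENNReal.continuous_ofReal.comp (by fun_prop)
    simpa using this.tendsto t

/-- The flow increases the overlap with any set whose fibres are centred intervals. -/
lemma ElemSet.inter_le_of_fib_Ico {E B : Set (ℝ × X)} (hE : ElemSet E) (hB : MeasurableSet B)
    (hfib : ∀ x, ∃ r : ℝ, 0 ≤ r ∧ fib B x =ᵐ[volume] Ico (-r) r) (t : ℝ) :
    ((volume : Measure ℝ).prod ν) (E ∩ B) ≤ ((volume : Measure ℝ).prod ν) (Phi E t ∩ B) := by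
  rw [prod_fib ((hE.measurable_Phi t).inter hB), prod_fib (hE.measurableSet.inter hB)]
  refine lintegral_mono fun x => ?_
  obtain ⟨r, hr, h⟩ := hfib x
  have h1 : volume (fib (E ∩ B) x) = volume (fib E x ∩ Ico (-r) r) :=
    measure_congr ((ae_eq_refl (fib E x)).inter h)
  have h2 : volume (fib (Phi E t ∩ B) x) = volume (phi (fib E x) t ∩ Ico (-r) r) :=
    measure_congr ((ae_eq_refl (phi (fib E x) t)).inter h)
  rw [h1, h2]
  exact volume_inter_Ico_le_phi (hE.fu x) hr t

/-- At time `1` the fibres are themselves centred intervals, so that their overlap with a centred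
interval is the smaller of the two lengths. -/
lemma ElemSet.lintegral_min_le {E B : Set (ℝ × X)} (hE : ElemSet E) (hB : MeasurableSet B)
    (hfib : ∀ x, ∃ r : ℝ, 0 ≤ r ∧ fib B x =ᵐ[volume] Ico (-r) r) {t : ℝ} (ht : 1 ≤ t) :
    ∫⁻ x, min (volume (fib E x)) (volume (fib B x)) ∂ν ≤ ((volume : Measure ℝ).prod ν) (Phi E t ∩ B) := by
  rw [prod_fib ((hE.measurable_Phi t).inter hB)]
  refine lintegral_mono fun x => ?_
  obtain ⟨r, hr, h⟩ := hfib x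
  have h2 : volume (fib (Phi E t ∩ B) x) = volume (phi (fib E x) t ∩ Ico (-r) r) :=
    measure_congr ((ae_eq_refl (phi (fib E x) t)).inter h)
  rw [h2, measure_congr h]
  exact min_le_volume_phi_inter_Ico (hE.fu x) r ht

/-- `T` on `ℝ × X` as an integral over the base of `T` of the fibres. -/
lemma TT_fib [AddCommGroup X] [MeasurableAdd₂ X] [MeasurableNeg X] {A B C : Set (ℝ × X)}
    (hA : MeasurableSet A) (hB : MeasurableSet B) (hC : MeasurableSet C) :
    TT ((volume : Measure ℝ).prod ν) A B C = ∫⁻ x, ∫⁻ x', TT volume (fib A x) (fib B x') (fib C (-x - x')) ∂ν ∂ν := by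
  have hS : MeasurableSet {q : (X × X) × (ℝ × ℝ) | (q.2.1, q.1.1) ∈ A ∧ (q.2.2, q.1.2) ∈ B ∧
      (-q.2.1 - q.2.2, -q.1.1 - q.1.2) ∈ C} := by
    refine MeasurableSet.inter ?_ (MeasurableSet.inter ?_ ?_)
    · exact hA.preimage (by fun_prop)
    · exact hB.preimage (by fun_prop)
    · simp only [sub_eq_add_neg]
      exact hC.preimage (by fun_prop)
  set f : (X × X) × (ℝ × ℝ) → ENNReal := indicator _ 1 with hf
  have hfm : Measurable f := measurable_const.indicator hS
  have e1 : TT ((volume : Measure ℝ).prod ν) A B C = ∫⁻ y, ∫⁻ x, ∫⁻ y', ∫⁻ x', f ((x, x'), (y, y')) ∂ν ∂volume ∂ν ∂volume := by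
    have hS' : MeasurableSet {p : (ℝ × X) × (ℝ × X) | p.1 ∈ A ∧ p.2 ∈ B ∧ -p.1 - p.2 ∈ C} :=
      hS.preimage (f := fun p : (ℝ × X) × (ℝ × X) => ((p.1.2, p.2.2), (p.1.1, p.2.1)))
        (by fun_prop)
    rw [TT, ← lintegral_indicator_one hS', lintegral_prod _ (by
      exact (measurable_const.indicator hS').aemeasurable), lintegral_prod]
    · refine lintegral_congr fun y => lintegral_congr fun x => ?_
      rw [lintegral_prod]
      · rfl
      · exact ((measurable_const.indicator hS').comp measurable_prodMk_left).aemeasurable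
    · exact (measurable_const.indicator hS').lintegral_prod_right'.aemeasurable
  have e2 : ∀ x x', TT volume (fib A x) (fib B x') (fib C (-x - x')) =
      ∫⁻ y, ∫⁻ y', f ((x, x'), (y, y')) := by
    intro x x'
    have hS' := measurable_prodMk_left (x := (x, x')) hS
    rw [← lintegral_prod (fun p => f ((x, x'), p)) (hfm.comp measurable_prodMk_left).aemeasurable]
    exact (lintegral_indicator_one hS').symm
  simp_rw [e1, e2]
  rw [lintegral_lintegral_swap]
  · refine lintegral_congr fun x => ?_
    calc _ = ∫⁻ y, ∫⁻ x', ∫⁻ y', f ((x, x'), (y, y')) ∂volume ∂ν ∂volume := by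
          refine lintegral_congr fun y => lintegral_lintegral_swap ?_
          exact (hfm.comp (by fun_prop :
            Measurable fun p : ℝ × X => ((x, p.2), (y, p.1)))).aemeasurable
      _ = _ := by
          refine lintegral_lintegral_swap ?_
          have : Measurable fun p : (ℝ × X) × ℝ => f ((x, p.1.2), (p.1.1, p.2)) :=
            hfm.comp (by fun_prop)
          exact this.lintegral_prod_right'.aemeasurable
  · have : Measurable fun p : ((ℝ × X) × ℝ) × X => f ((p.1.1.2, p.2), (p.1.1.1, p.1.2)) :=
      hfm.comp (by fun_prop)
    exact this.lintegral_prod_right'.lintegral_prod_right'.aemeasurable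

lemma ElemSet.TT_mono [AddCommGroup X] [MeasurableAdd₂ X] [MeasurableNeg X] {A B C : Set (ℝ × X)}
    (hA : ElemSet A) (hB : ElemSet B) (hC : ElemSet C) {s t : ℝ} (hst : s ≤ t) :
    TT ((volume : Measure ℝ).prod ν) (Phi A s) (Phi B s) (Phi C s) ≤ TT ((volume : Measure ℝ).prod ν) (Phi A t) (Phi B t) (Phi C t) := by
  rw [TT_fib (hA.measurable_Phi s) (hB.measurable_Phi s) (hC.measurable_Phi s),
    TT_fib (hA.measurable_Phi t) (hB.measurable_Phi t) (hC.measurable_Phi t)]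
  exact lintegral_mono fun x => lintegral_mono fun x' =>
    TT_phi_mono (hA.fu _) (hB.fu _) (hC.fu _) hst

lemma isSetRing_elemSet : IsSetRing {E : Set (ℝ × X) | ElemSet E} where
  empty_mem := by simpa using ElemSet.prod FU.empty (MeasurableSet.empty (α := X))
  union_mem _ _ hE hF := hE.op hF (· ∪ ·) (fun _ _ => FU.union) fun _ => rfl
  sdiff_mem _ _ hE hF := hE.op hF (· \ ·) (fun _ _ => FU.diff) fun _ => rfl

lemma generateFrom_elemSet : (inferInstance : MeasurableSpace (ℝ × X)) =
    MeasurableSpace.generateFrom {E : Set (ℝ × X) | ElemSet E} := by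
  refine le_antisymm (sup_le ?_ ?_) (MeasurableSpace.generateFrom_le fun E hE => hE.measurableSet)
  · rw [BorelSpace.measurable_eq (α := ℝ), borel_eq_generateFrom_Ico,
      MeasurableSpace.comap_generateFrom]
    refine MeasurableSpace.generateFrom_mono ?_
    rintro _ ⟨_, ⟨a, b, -, rfl⟩, rfl⟩
    have := ElemSet.prod (FU.Ico a b) (MeasurableSet.univ (α := X))
    rwa [prod_univ] at this
  · rintro _ ⟨Q, hQ, rfl⟩
    have : Prod.snd ⁻¹' Q = ⋃ n : ℕ, (Ico (-(n:ℝ)) n ×ˢ Q : Set (ℝ × X)) := by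
      ext ⟨y, x⟩
      simp only [mem_preimage, mem_iUnion, mem_prod, mem_Ico]
      refine ⟨fun h => ?_, fun ⟨n, h⟩ => h.2⟩
      obtain ⟨n, hn⟩ := exists_nat_gt |y|
      exact ⟨n, ⟨(abs_lt.1 hn).1.le, (abs_lt.1 hn).2⟩, h⟩
    rw [this]
    exact MeasurableSet.iUnion fun n =>
      MeasurableSpace.measurableSet_generateFrom (ElemSet.prod (FU.Ico _ _) hQ)

end FiberFlow

/-- Elementary sets are dense among sets of finite measure. -/
lemma exists_elemSet_approx {X : Type*} [MeasurableSpace X] {ν : Measure X} [SigmaFinite ν]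
    {E : Set (ℝ × X)}
    (hE : MeasurableSet E) (hEt : ((volume : Measure ℝ).prod ν) E ≠ ⊤) {ε : ENNReal} (hε : 0 < ε) :
    ∃ F, ElemSet F ∧ ((volume : Measure ℝ).prod ν) F ≠ ⊤ ∧ ((volume : Measure ℝ).prod ν) (symmDiff F E) < ε := by
  set box : ℕ → Set (ℝ × X) := fun k => Ico (-(k:ℝ)) k ×ˢ spanningSets ν k with hbox
  have hbE : ∀ k, ElemSet (box k) := fun k => ElemSet.prod (FU.Ico _ _) (measurableSet_spanningSets ν k)
  have hbfin : ∀ k, ((volume : Measure ℝ).prod ν) (box k) ≠ ⊤ := by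
    intro k
    rw [hbox, Measure.prod_prod]
    exact ENNReal.mul_ne_top (by simp) (measure_spanningSets_lt_top ν k).ne
  have hbm : Monotone box := by
    intro k l hkl
    have : (k:ℝ) ≤ l := by exact_mod_cast hkl
    exact prod_mono (Ico_subset_Ico (by linarith) this) (monotone_spanningSets ν hkl)
  have hbU : ⋃ k, box k = univ := by
    ext ⟨y, x⟩
    simp only [mem_iUnion, mem_univ, iff_true]
    obtain ⟨n, hn⟩ := exists_nat_gt |y|
    have hx : x ∈ ⋃ i, spanningSets ν i := by rw [iUnion_spanningSets]; trivial
    obtain ⟨m, hm⟩ := mem_iUnion.1 hx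
    have : (n:ℝ) ≤ (max n m : ℕ) := by exact_mod_cast le_max_left n m
    refine ⟨max n m, ⟨?_, ?_⟩, monotone_spanningSets ν (le_max_right n m) hm⟩
    · linarith [(abs_lt.1 hn).1]
    · exact (abs_lt.1 hn).2.trans_le this
  have hlim : Filter.Tendsto (fun k => ((volume : Measure ℝ).prod ν) (E \ box k)) Filter.atTop (nhds 0) := by
    have := tendsto_measure_iInter_atTop (μ := (volume : Measure ℝ).prod ν) (s := fun k => E \ box k)
      (fun k => (hE.diff (hbE k).measurableSet).nullMeasurableSet)
      (fun k l hkl => sdiff_subset_sdiff_right (hbm hkl))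
      ⟨0, ne_top_of_le_ne_top hEt (measure_mono sdiff_subset)⟩
    rwa [← sdiff_iUnion, hbU, sdiff_univ, measure_empty] at this
  obtain ⟨k, hk⟩ := (hlim.eventually_lt_const (ENNReal.half_pos hε.ne')).exists
  have : IsFiniteMeasure (((volume : Measure ℝ).prod ν).restrict (box k)) := ⟨by
    rw [Measure.restrict_apply_univ]; exact (hbfin k).lt_top⟩
  obtain ⟨F, hF, hFE⟩ := exists_measure_symmDiff_lt_of_generateFrom_isSetRing
    (μ := ((volume : Measure ℝ).prod ν).restrict (box k)) (isSetRing_elemSet (X := X))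
    ⟨{box k}, countable_singleton _, by simpa using hbE k, by
      simp [Measure.restrict_apply (hbE k).measurableSet.compl]⟩ generateFrom_elemSet hE
      (ENNReal.half_pos hε.ne')
  have hF' : ElemSet (F ∩ box k) := ElemSet.op hF (hbE k) (· ∩ ·) (fun _ _ => FU.inter) fun _ => rfl
  refine ⟨F ∩ box k, hF', ne_top_of_le_ne_top (hbfin k) (measure_mono inter_subset_right), ?_⟩
  rw [Measure.restrict_apply ((ElemSet.measurableSet hF).symmDiff hE)] at hFE
  calc ((volume : Measure ℝ).prod ν) (symmDiff (F ∩ box k) E) ≤ ((volume : Measure ℝ).prod ν) ((symmDiff F E ∩ box k) ∪ (E \ box k)) := by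
        refine measure_mono ?_
        intro p hp
        simp only [mem_symmDiff, mem_inter_iff, mem_union, mem_sdiff] at hp ⊢
        tauto
    _ ≤ _ := measure_union_le _ _
    _ < ε / 2 + ε / 2 := ENNReal.add_lt_add hFE hk
    _ = ε := ENNReal.add_halves ε

/-! ### Continuity of the trilinear form with respect to convergence in measure -/

lemma tendsto_of_close {ι : Type*} {l : Filter ι} {b e : ι → ENNReal} {a : ENNReal}
    (he : Filter.Tendsto e l (nhds 0)) (h1 : ∀ i, b i ≤ a + e i) (h2 : ∀ i, a ≤ b i + e i) :
    Filter.Tendsto b l (nhds a) := by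
  refine tendsto_of_tendsto_of_tendsto_of_le_of_le (g := fun i => a - e i) (h := fun i => a + e i)
    ?_ ?_ (fun i => tsub_le_iff_right.2 (h2 i)) h1
  · simpa using ENNReal.Tendsto.sub (tendsto_const_nhds (x := a)) he (Or.inr ENNReal.zero_ne_top)
  · simpa using (tendsto_const_nhds (x := a)).add he

section Generic

variable {G : Type*} [MeasurableSpace G] {μ : Measure G}

lemma measure_inter_le_add (A B S : Set G) :
    μ (A ∩ S) ≤ μ (B ∩ S) + μ (symmDiff A B) := by
  refine (measure_mono ?_).trans (measure_union_le _ _)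
  intro p hp
  simp only [mem_symmDiff, mem_inter_iff, mem_union] at hp ⊢
  tauto

lemma measure_le_add_symmDiff (A B : Set G) : μ A ≤ μ B + μ (symmDiff A B) := by
  simpa using measure_inter_le_add (μ := μ) A B univ

lemma tendsto_measure_inter {ι : Type*} {l : Filter ι} {A : ι → Set G} {A₀ : Set G}
    (h : Filter.Tendsto (fun i => μ (symmDiff (A i) A₀)) l (nhds 0)) (S : Set G) :
    Filter.Tendsto (fun i => μ (A i ∩ S)) l (nhds (μ (A₀ ∩ S))) :=
  tendsto_of_close h (fun i => measure_inter_le_add _ _ _)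
    (fun i => by rw [symmDiff_comm]; exact measure_inter_le_add _ _ _)

lemma tendsto_measure_of_symmDiff {ι : Type*} {l : Filter ι} {A : ι → Set G} {A₀ : Set G}
    (h : Filter.Tendsto (fun i => μ (symmDiff (A i) A₀)) l (nhds 0)) :
    Filter.Tendsto (fun i => μ (A i)) l (nhds (μ A₀)) := by
  simpa using tendsto_measure_inter h univ

section TTcont

variable [AddCommGroup G] [SFinite μ]

lemma TT_le_mul_left (A B C : Set G) : TT μ A B C ≤ μ A * μ B := by
  rw [← Measure.prod_prod]
  exact measure_mono fun p hp => ⟨hp.1, hp.2.1⟩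

lemma TT_le_mul_right (hinv : ∀ x : G, MeasurePreserving (fun y => -x - y) μ μ) {A B C : Set G}
    (hA : MeasurableSet A) (hC : MeasurableSet C) [MeasurableAdd₂ G] [MeasurableNeg G] :
    TT μ A B C ≤ μ A * μ C := by
  calc TT μ A B C ≤ (μ.prod μ) {p | p.1 ∈ A ∧ -p.1 - p.2 ∈ C} :=
        measure_mono fun p hp => ⟨hp.1, hp.2.2⟩
    _ = ∫⁻ x, A.indicator (fun _ => μ C) x ∂μ := by
        rw [Measure.prod_apply]
        · refine lintegral_congr fun x => ?_
          by_cases hx : x ∈ A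
          · simp only [preimage_ofPred_eq, hx, true_and, indicator_of_mem]
            exact (hinv x).measure_preimage hC.nullMeasurableSet
          · simp [hx]
        · refine (measurable_fst hA).inter ?_
          simp only [sub_eq_add_neg]
          exact hC.preimage (by fun_prop)
    _ = μ A * μ C := by rw [lintegral_indicator hA, setLIntegral_const, mul_comm]

/-- Telescoping bound for the variation of `T`. -/
lemma TT_le_add (hinv : ∀ x : G, MeasurePreserving (fun y => -x - y) μ μ)
    [MeasurableAdd₂ G] [MeasurableNeg G] {A B C A' B' C' : Set G}
    (hA' : MeasurableSet A') (hC : MeasurableSet C) (hC' : MeasurableSet C') :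
    TT μ A B C ≤ TT μ A' B' C' + (μ (symmDiff A A') * μ B + μ A' * μ (symmDiff B B') +
      μ A' * μ (symmDiff C C')) := by
  have h1 : TT μ A B C ≤ TT μ A' B' C' + TT μ (symmDiff A A') B C + TT μ A' (symmDiff B B') C +
      TT μ A' B' (symmDiff C C') := by
    refine (measure_mono ?_).trans ((measure_union_le (_ ∪ _ ∪ _) _).trans (add_le_add_left
      ((measure_union_le (_ ∪ _) _).trans (add_le_add_left (measure_union_le _ _) _)) _))
    rintro p ⟨h1, h2, h3⟩
    simp only [mem_union, mem_ofPred_eq, mem_symmDiff]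
    tauto
  refine h1.trans ?_
  rw [add_assoc, add_assoc, add_assoc]
  gcongr
  · exact TT_le_mul_left _ _ _
  · exact TT_le_mul_left _ _ _
  · exact TT_le_mul_right hinv hA' (hC.symmDiff hC')

lemma tendsto_TT (hinv : ∀ x : G, MeasurePreserving (fun y => -x - y) μ μ)
    [MeasurableAdd₂ G] [MeasurableNeg G] {ι : Type*} {l : Filter ι} {A B C : ι → Set G}
    {A₀ B₀ C₀ : Set G} (hA : ∀ i, MeasurableSet (A i)) (hC : ∀ i, MeasurableSet (C i))
    (hA₀ : MeasurableSet A₀) (hC₀ : MeasurableSet C₀) (fA : μ A₀ ≠ ⊤) (fB : μ B₀ ≠ ⊤)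
    (tA : Filter.Tendsto (fun i => μ (symmDiff (A i) A₀)) l (nhds 0))
    (tB : Filter.Tendsto (fun i => μ (symmDiff (B i) B₀)) l (nhds 0))
    (tC : Filter.Tendsto (fun i => μ (symmDiff (C i) C₀)) l (nhds 0)) :
    Filter.Tendsto (fun i => TT μ (A i) (B i) (C i)) l (nhds (TT μ A₀ B₀ C₀)) := by
  refine tendsto_of_close (e := fun i =>
    μ (symmDiff (A i) A₀) * (μ B₀ + μ (symmDiff (B i) B₀)) +
    (μ A₀ + μ (symmDiff (A i) A₀)) * μ (symmDiff (B i) B₀) +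
    (μ A₀ + μ (symmDiff (A i) A₀)) * μ (symmDiff (C i) C₀)) ?_ (fun i => ?_) (fun i => ?_)
  · have hA' := (tendsto_const_nhds (x := μ A₀)).add tA
    have hB' := (tendsto_const_nhds (x := μ B₀)).add tB
    rw [add_zero] at hA' hB'
    have := ((ENNReal.Tendsto.mul tA (Or.inr fB) hB' (Or.inr ENNReal.zero_ne_top)).add
      (ENNReal.Tendsto.mul hA' (Or.inr ENNReal.zero_ne_top) tB (Or.inr fA))).add
      (ENNReal.Tendsto.mul hA' (Or.inr ENNReal.zero_ne_top) tC (Or.inr fA))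
    simpa using this
  · refine (TT_le_add (B' := B₀) hinv hA₀ (hC i) hC₀).trans ?_
    gcongr
    · exact measure_le_add_symmDiff _ _
    · exact le_self_add
    · exact le_self_add
  · refine (TT_le_add (B' := B i) hinv (hA i) hC₀ (hC i)).trans ?_
    rw [symmDiff_comm A₀, symmDiff_comm B₀, symmDiff_comm C₀]
    gcongr
    · exact le_self_add
    · exact measure_le_add_symmDiff _ _
    · exact measure_le_add_symmDiff _ _

end TTcont

/-- The limit superior of a sequence of sets is close to each of its terms when consecutive
distances are summable: a point that is in one of the limit superior and `P n` but not in the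
other must lie in some consecutive symmetric difference. -/
lemma measure_limsup_symmDiff_le (P : ℕ → Set G) (n : ℕ) :
    μ (symmDiff (⋂ m, ⋃ k, P (m + k)) (P n)) ≤ ∑' k, μ (symmDiff (P (n + k)) (P (n + k + 1))) := by
  refine (measure_mono ?_).trans (measure_iUnion_le _)
  intro x hx
  by_contra hcon
  simp only [mem_iUnion, not_exists, mem_symmDiff, not_or, not_and, not_not] at hcon
  have key : ∀ k, x ∈ P (n + k) ↔ x ∈ P n := by
    intro k
    induction k with
    | zero => simp
    | succ k ih =>
      rw [← ih]
      exact ⟨(hcon k).2, (hcon k).1⟩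
  rcases hx with ⟨h1, h2⟩ | ⟨h1, h2⟩
  · obtain ⟨k, hk⟩ := mem_iUnion.1 (mem_iInter.1 h1 n)
    exact h2 ((key k).1 hk)
  · refine h2 (mem_iInter.2 fun m => mem_iUnion.2 ⟨n, ?_⟩)
    rw [add_comm]
    exact (key m).2 h1

end Generic

/-! ### One step of the deformation on `ℝ × X` -/

/-- `F` is a measure preserving deformation, continuous in measure, of the triple `E`, along which
`T` is nondecreasing. Time runs over all of `ℝ`, and the triple is constant for `t ≤ 0`. -/
structure IsFlow {G : Type*} [MeasurableSpace G] [AddCommGroup G] (μ : Measure G)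
    (E : Fin 3 → Set G) (F : Fin 3 → ℝ → Set G) : Prop where
  meas : ∀ j t, MeasurableSet (F j t)
  initial : ∀ j t, t ≤ 0 → F j t = E j
  measure_eq : ∀ j t, μ (F j t) = μ (E j)
  cont : ∀ j t, Filter.Tendsto (fun s => μ (symmDiff (F j s) (F j t))) (nhds t) (nhds 0)
  mono : Monotone fun t => TT μ (F 0 t) (F 1 t) (F 2 t)

lemma tsum_two_pow_tail (n : ℕ) : ∑' k : ℕ, 2 * (2⁻¹ : ENNReal) ^ (n + k) = 4 * 2⁻¹ ^ n := by
  simp_rw [pow_add]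
  rw [ENNReal.tsum_mul_left, ENNReal.tsum_mul_left, ENNReal.tsum_geometric,
    ENNReal.one_sub_inv_two, inv_inv]
  ring

lemma tendsto_four_pow : Filter.Tendsto (fun n : ℕ => 4 * (2⁻¹ : ENNReal) ^ n) Filter.atTop
    (nhds 0) := by
  have h := ENNReal.tendsto_pow_atTop_nhds_zero_of_lt_one (r := 2⁻¹) (by simp)
  simpa using ENNReal.Tendsto.const_mul h (Or.inr (by simp : (4 : ENNReal) ≠ ⊤))

/-- The flow of a set of finite measure, as the limit superior of the flows of elementary sets
converging to it geometrically fast. -/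
lemma exists_limit_path {X : Type*} [MeasurableSpace X] {ν : Measure X} [SigmaFinite ν]
    {E : Set (ℝ × X)} (hE : MeasurableSet E) (hEt : ((volume : Measure ℝ).prod ν) E ≠ ⊤) :
    ∃ (A : ℕ → Set (ℝ × X)) (F : ℝ → Set (ℝ × X)),
      (∀ n, ElemSet (A n)) ∧ (∀ n, ((volume : Measure ℝ).prod ν) (A n) ≠ ⊤) ∧
      (∀ n, ((volume : Measure ℝ).prod ν) (symmDiff (A n) E) ≤ 4 * 2⁻¹ ^ n) ∧
      (∀ t, MeasurableSet (F t)) ∧ (∀ t, t ≤ 0 → F t = E) ∧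
      ∀ n t, ((volume : Measure ℝ).prod ν) (symmDiff (Phi (A n) t) (F t)) ≤ 4 * 2⁻¹ ^ n := by
  have h := fun n : ℕ => exists_elemSet_approx hE hEt
    (ε := 2⁻¹ ^ n) (ENNReal.pow_pos (by simp) n)
  choose A hA hAt hAE using h
  have hAE' : ∀ n, ((volume : Measure ℝ).prod ν) (symmDiff (A n) E) ≤ 4 * 2⁻¹ ^ n := fun n =>
    (hAE n).le.trans (le_mul_of_one_le_left zero_le (by norm_num))
  refine ⟨A, fun t => if t ≤ 0 then E else ⋂ m, ⋃ k, Phi (A (m + k)) t, hA, hAt, hAE', ?_, ?_, ?_⟩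
  · intro t
    dsimp only
    split_ifs
    · exact hE
    · exact MeasurableSet.iInter fun m => MeasurableSet.iUnion fun k => (hA _).measurable_Phi t
  · intro t ht
    simp [ht]
  · intro n t
    dsimp only
    split_ifs with ht
    · rw [(hA n).Phi_nonpos ht]; exact hAE' n
    · rw [symmDiff_comm, ← tsum_two_pow_tail]
      refine (measure_limsup_symmDiff_le (fun n => Phi (A n) t) n).trans
        (ENNReal.tsum_le_tsum fun k => ?_)
      refine ((hA _).contraction (hA _) (hAt _) (hAt _) t).trans ?_
      refine (measure_symmDiff_le _ E _).trans ?_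
      rw [two_mul, symmDiff_comm E]
      refine add_le_add (hAE _).le ((hAE _).le.trans ?_)
      rw [pow_succ]
      exact mul_le_of_le_one_right zero_le (by simp)

/-- The fibrewise flow of a triple of finite measure sets. It increases the overlap with sets `B`
whose fibres are centred intervals, and at time `1` this overlap is at least what is obtained by
replacing every fibre by the centred interval of the same length. -/
lemma step_prod {X : Type*} [MeasurableSpace X] [AddCommGroup X] [MeasurableAdd₂ X]
    [MeasurableNeg X] {ν : Measure X} [SigmaFinite ν] [ν.IsAddLeftInvariant] [ν.IsNegInvariant]
    {E : Fin 3 → Set (ℝ × X)}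
    (hE : ∀ j, MeasurableSet (E j)) (hEt : ∀ j, ((volume : Measure ℝ).prod ν) (E j) ≠ ⊤) :
    ∃ F, IsFlow ((volume : Measure ℝ).prod ν) E F ∧
      ∀ B : Set (ℝ × X), MeasurableSet B →
        (∀ x, ∃ r : ℝ, 0 ≤ r ∧ fib B x =ᵐ[volume] Ico (-r) r) → ∀ j,
        (∀ t, ((volume : Measure ℝ).prod ν) (E j ∩ B) ≤
          ((volume : Measure ℝ).prod ν) (F j t ∩ B)) ∧
        ∫⁻ x, min (volume (fib (E j) x)) (volume (fib B x)) ∂ν ≤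
          ((volume : Measure ℝ).prod ν) (F j 1 ∩ B) := by
  set μ := (volume : Measure ℝ).prod ν with hμ
  choose A F hA hAt hAE hFm hF0 hAF using fun j => exists_limit_path (hE j) (hEt j)
  have lim : ∀ j t, Filter.Tendsto (fun n => μ (symmDiff (Phi (A j n) t) (F j t)))
      Filter.atTop (nhds 0) := fun j t =>
    tendsto_of_tendsto_of_tendsto_of_le_of_le tendsto_const_nhds tendsto_four_pow
      (fun _ => zero_le) (fun n => hAF j n t)
  have lim0 : ∀ j, Filter.Tendsto (fun n => μ (symmDiff (A j n) (E j)))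
      Filter.atTop (nhds 0) := fun j =>
    tendsto_of_tendsto_of_tendsto_of_le_of_le tendsto_const_nhds tendsto_four_pow
      (fun _ => zero_le) (fun n => hAE j n)
  have hmeq : ∀ j t, μ (F j t) = μ (E j) := by
    intro j t
    refine tendsto_nhds_unique (tendsto_measure_of_symmDiff (lim j t)) ?_
    exact (tendsto_measure_of_symmDiff (lim0 j)).congr fun n => ((hA j n).measure_Phi t).symm
  have hinv : ∀ x : ℝ × X, MeasurePreserving (fun y => -x - y) μ μ := fun x =>
    (Measure.measurePreserving_sub_left volume (-x.1)).prod
      (Measure.measurePreserving_sub_left ν (-x.2))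
  have : MeasurableAdd₂ (ℝ × X) :=
    ⟨((measurable_fst.comp measurable_fst).add (measurable_fst.comp measurable_snd)).prodMk
      ((measurable_snd.comp measurable_fst).add (measurable_snd.comp measurable_snd))⟩
  have : MeasurableNeg (ℝ × X) := ⟨measurable_fst.neg.prodMk measurable_snd.neg⟩
  refine ⟨F, ⟨hFm, hF0, hmeq, ?_, ?_⟩, ?_⟩
  · intro j t
    rw [ENNReal.tendsto_nhds_zero]
    intro ε hε
    have h3 : 0 < ε / 3 := ENNReal.div_pos hε.ne' (by simp)
    obtain ⟨n, hn⟩ := (tendsto_four_pow.eventually_lt_const h3).exists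
    filter_upwards [((hA j n).tendsto (hAt j n) t).eventually_lt_const h3] with s hs
    calc μ (symmDiff (F j s) (F j t))
        ≤ μ (symmDiff (F j s) (Phi (A j n) s)) + (μ (symmDiff (Phi (A j n) s) (Phi (A j n) t)) +
          μ (symmDiff (Phi (A j n) t) (F j t))) :=
          (measure_symmDiff_le _ _ _).trans (add_le_add le_rfl (measure_symmDiff_le _ _ _))
      _ ≤ ε / 3 + (ε / 3 + ε / 3) := by
          rw [symmDiff_comm (F j s)]
          exact add_le_add ((hAF j n s).trans hn.le) (add_le_add hs.le ((hAF j n t).trans hn.le))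
      _ = ε := by rw [← add_assoc, ENNReal.add_thirds]
  · intro s t hst
    have key : ∀ t, Filter.Tendsto (fun n => TT μ (Phi (A 0 n) t) (Phi (A 1 n) t) (Phi (A 2 n) t))
        Filter.atTop (nhds (TT μ (F 0 t) (F 1 t) (F 2 t))) := fun t =>
      tendsto_TT hinv (fun n => (hA 0 n).measurable_Phi t) (fun n => (hA 2 n).measurable_Phi t)
        (hFm 0 t) (hFm 2 t) (by rw [hmeq]; exact hEt 0) (by rw [hmeq]; exact hEt 1)
        (lim 0 t) (lim 1 t) (lim 2 t)
    exact le_of_tendsto_of_tendsto' (key s) (key t) fun n =>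
      (hA 0 n).TT_mono (hA 1 n) (hA 2 n) hst
  · intro B hB hfib j
    refine ⟨fun t => ?_, ?_⟩
    · exact le_of_tendsto_of_tendsto' (tendsto_measure_inter (lim0 j) B)
        (tendsto_measure_inter (lim j t) B) fun n => (hA j n).inter_le_of_fib_Ico hB hfib t
    · have h1 : ∀ n, ∫⁻ x, min (volume (fib (E j) x)) (volume (fib B x)) ∂ν ≤
          μ (Phi (A j n) 1 ∩ B) + μ (symmDiff (A j n) (E j)) := by
        intro n
        refine le_trans ?_ (add_le_add_left ((hA j n).lintegral_min_le hB hfib le_rfl) _)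
        rw [hμ, prod_fib ((hA j n).measurableSet.symmDiff (hE j)), ← lintegral_add_left
          ((measurable_volume_fib (hA j n).measurableSet).min (measurable_volume_fib hB))]
        refine lintegral_mono fun x => ?_
        have h2 : volume (fib (E j) x) ≤ volume (fib (A j n) x) +
            volume (fib (symmDiff (A j n) (E j)) x) := by
          have := measure_le_add_symmDiff (μ := volume) (fib (E j) x) (fib (A j n) x)
          rwa [symmDiff_comm] at this
        refine (min_le_min h2 (le_self_add (b := volume (fib (symmDiff (A j n) (E j)) x)))).trans ?_
        rw [min_add_add_right]
      have h3 := (tendsto_measure_inter (lim j 1) B).add (lim0 j)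
      rw [add_zero] at h3
      exact ge_of_tendsto' h3 h1

/-! ### Transfer to `ℝ^d` -/

lemma exists_basis (n : ℕ) (v : Vec (n + 1)) :
    ∃ (b : OrthonormalBasis (Fin (n + 1)) ℝ (Vec (n + 1))) (a : ℝ), v = a • b 0 := by
  by_cases hv : v = 0
  · exact ⟨EuclideanSpace.basisFun _ _, 0, by simp [hv]⟩
  · have hn : ‖v‖ ≠ 0 := norm_ne_zero_iff.2 hv
    have ho : Orthonormal ℝ (({0} : Set (Fin (n + 1))).domRestrict
        (fun _ : Fin (n + 1) => ‖v‖⁻¹ • v)) := by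
      refine ⟨fun i => ?_, fun i j hij => (hij (Subsingleton.elim _ _)).elim⟩
      simp [domRestrict, norm_smul, hn]
    obtain ⟨b, hb⟩ := ho.exists_orthonormalBasis_extension_of_card_eq (by simp)
    exact ⟨b, ‖v‖, by rw [hb 0 rfl, smul_smul, mul_inv_cancel₀ hn, one_smul]⟩

/-- Measure preserving additive coordinates on `ℝ^(n+1)` in which `v` points along the first
axis. -/
lemma exists_coords (n : ℕ) (v : Vec (n + 1)) :
    ∃ Ψ : Vec (n + 1) ≃ᵐ ℝ × (Fin n → ℝ),
      MeasurePreserving Ψ volume ((volume : Measure ℝ).prod volume) ∧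
      (∀ x y, Ψ (x + y) = Ψ x + Ψ y) ∧ (∀ x, Ψ (-x) = -Ψ x) ∧
      (∀ x, ‖x‖ ^ 2 = (Ψ x).1 ^ 2 + ∑ i, (Ψ x).2 i ^ 2) ∧ (Ψ v).2 = 0 := by
  obtain ⟨b, a, hv⟩ := exists_basis n v
  set Ψ : Vec (n + 1) ≃ᵐ ℝ × (Fin n → ℝ) :=
    (b.measurableEquiv.trans (MeasurableEquiv.toLp 2 (Fin (n + 1) → ℝ)).symm).trans
      (MeasurableEquiv.piFinSuccAbove (fun _ => ℝ) 0) with hΨ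
  have h1 : ∀ x, (Ψ x).1 = b.repr x 0 := fun x => rfl
  have h2 : ∀ x i, (Ψ x).2 i = b.repr x i.succ := fun x i => rfl
  refine ⟨Ψ, ?_, fun x y => ?_, fun x => ?_, fun x => ?_, ?_⟩
  · exact (volume_preserving_piFinSuccAbove (fun _ => ℝ) 0).comp
      ((PiLp.volume_preserving_ofLp (Fin (n + 1))).comp b.measurePreserving_measurableEquiv)
  · refine Prod.ext ?_ (funext fun i => ?_)
    · simp [h1]
    · simp [h2]
  · refine Prod.ext ?_ (funext fun i => ?_)
    · simp [h1]
    · simp [h2]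
  · rw [← b.repr.norm_map x, EuclideanSpace.real_norm_sq_eq, Fin.sum_univ_succ]
    rfl
  · funext i
    rw [h2, hv]
    simp

/-- The lines parallel to the first axis meet centred balls in centred intervals. -/
lemma fib_ball {n : ℕ} (Ψ : Vec (n + 1) ≃ᵐ ℝ × (Fin n → ℝ))
    (hn : ∀ x, ‖x‖ ^ 2 = (Ψ x).1 ^ 2 + ∑ i, (Ψ x).2 i ^ 2) (r : ℝ) (x : Fin n → ℝ) :
    ∃ ρ : ℝ, 0 ≤ ρ ∧ fib (Ψ.symm ⁻¹' Metric.closedBall 0 r) x =ᵐ[volume] Ico (-ρ) ρ := by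
  have hmem : ∀ y, y ∈ fib (Ψ.symm ⁻¹' Metric.closedBall 0 r) x ↔
      0 ≤ r ∧ y ^ 2 ≤ r ^ 2 - ∑ i, x i ^ 2 := by
    intro y
    have e := hn (Ψ.symm (y, x))
    rw [MeasurableEquiv.apply_symm_apply] at e
    have : y ∈ fib (Ψ.symm ⁻¹' Metric.closedBall 0 r) x ↔ ‖Ψ.symm (y, x)‖ ≤ r := by
      simp [fib]
    rw [this]
    constructor
    · intro h
      have h0 := norm_nonneg (Ψ.symm (y, x))
      refine ⟨h0.trans h, ?_⟩
      have := pow_le_pow_left₀ h0 h 2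
      simp only at e
      linarith
    · rintro ⟨h0, h⟩
      refine le_of_sq_le_sq ?_ h0
      simp only at e
      linarith
  by_cases h : 0 ≤ r ∧ 0 ≤ r ^ 2 - ∑ i, x i ^ 2
  · refine ⟨√(r ^ 2 - ∑ i, x i ^ 2), Real.sqrt_nonneg _, ?_⟩
    have : fib (Ψ.symm ⁻¹' Metric.closedBall 0 r) x =
        Icc (-√(r ^ 2 - ∑ i, x i ^ 2)) (√(r ^ 2 - ∑ i, x i ^ 2)) := by
      ext y
      rw [hmem, mem_Icc, ← abs_le, ← Real.sqrt_sq_eq_abs, Real.sqrt_le_sqrt_iff h.2]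
      simp [h.1]
    rw [this]
    exact Ico_ae_eq_Icc.symm
  · refine ⟨0, le_rfl, ?_⟩
    have : fib (Ψ.symm ⁻¹' Metric.closedBall 0 r) x = ∅ := by
      ext y
      rw [hmem]
      simp only [mem_empty_iff_false, iff_false]
      rintro ⟨h1, h2⟩
      exact h ⟨h1, (sq_nonneg y).trans h2⟩
    rw [this]
    simp

/-- One deformation step in direction `v`. At time `1` the overlap with the ball `B` of radius `r`
has grown at least by the measure of the points of `E j \ B` that the translation by `v` carries
into `B \ E j`. -/
lemma exists_step {n : ℕ} {E : Fin 3 → Set (Vec (n + 1))} (hE : ∀ j, MeasurableSet (E j))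
    (hEt : ∀ j, volume (E j) ≠ ⊤) (v : Vec (n + 1)) :
    ∃ F, IsFlow volume E F ∧
      (∀ j r t, volume (E j ∩ Metric.closedBall 0 r) ≤ volume (F j t ∩ Metric.closedBall 0 r)) ∧
      ∀ j r, volume (E j ∩ Metric.closedBall 0 r) + volume ((E j \ Metric.closedBall 0 r) ∩
        {x | x + v ∈ Metric.closedBall 0 r \ E j}) ≤ volume (F j 1 ∩ Metric.closedBall 0 r) := by
  obtain ⟨Ψ, hΨ, hadd, hneg, hnorm, hv⟩ := exists_coords n v
  have hsymm := hΨ.symm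
  have hpre : ∀ S, volume (Ψ ⁻¹' S) = ((volume : Measure ℝ).prod volume) S := fun S =>
    hΨ.measure_preimage_equiv S
  have hpre' : ∀ S, ((volume : Measure ℝ).prod volume) (Ψ.symm ⁻¹' S) = volume S := fun S =>
    hsymm.measure_preimage_equiv S
  have hback : ∀ S, Ψ ⁻¹' (Ψ.symm ⁻¹' S) = S := fun S => by ext; simp
  obtain ⟨F, hF, hB⟩ := step_prod (ν := (volume : Measure (Fin n → ℝ)))
    (E := fun j => Ψ.symm ⁻¹' E j) (fun j => Ψ.symm.measurable (hE j))
    (fun j => by rw [hpre']; exact hEt j)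
  have hball : ∀ j r t, volume (Ψ ⁻¹' F j t ∩ Metric.closedBall 0 r) =
      ((volume : Measure ℝ).prod volume) (F j t ∩ Ψ.symm ⁻¹' Metric.closedBall 0 r) := by
    intro j r t
    rw [← hpre, preimage_inter, hback]
  have hbm : ∀ r, MeasurableSet (Ψ.symm ⁻¹' Metric.closedBall 0 r) := fun r =>
    Ψ.symm.measurable Metric.isClosed_closedBall.measurableSet
  have hTT : ∀ t, TT volume (Ψ ⁻¹' F 0 t) (Ψ ⁻¹' F 1 t) (Ψ ⁻¹' F 2 t) =
      TT ((volume : Measure ℝ).prod volume) (F 0 t) (F 1 t) (F 2 t) := by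
    intro t
    have h := (hΨ.prod hΨ).measure_preimage
      (s := {p | p.1 ∈ F 0 t ∧ p.2 ∈ F 1 t ∧ -p.1 - p.2 ∈ F 2 t}) ?_
    · rw [TT, TT, ← h]
      congr 1
      ext p
      simp [sub_eq_add_neg, hadd, hneg]
    · refine MeasurableSet.nullMeasurableSet ?_
      refine (measurable_fst (hF.meas 0 t)).inter ((measurable_snd (hF.meas 1 t)).inter ?_)
      exact (hF.meas 2 t).preimage (by fun_prop)
  refine ⟨fun j t => Ψ ⁻¹' F j t, ⟨fun j t => Ψ.measurable (hF.meas j t), fun j t ht => ?_,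
    fun j t => ?_, fun j t => ?_, fun s t hst => ?_⟩, fun j r t => ?_, fun j r => ?_⟩
  · rw [hF.initial j t ht, hback]
  · rw [hpre, hF.measure_eq, hpre']
  · refine (hF.cont j t).congr fun s => ?_
    rw [← hpre]; rfl
  · dsimp only
    rw [hTT, hTT]
    exact hF.mono hst
  · rw [hball, ← hpre' (E j ∩ _), preimage_inter]
    exact ((hB _ (hbm r) (fib_ball Ψ hnorm r)) j).1 t
  · rw [hball]
    refine le_trans ?_ ((hB _ (hbm r) (fib_ball Ψ hnorm r)) j).2
    set B := Metric.closedBall (0 : Vec (n + 1)) r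
    have hBm : MeasurableSet B := Metric.isClosed_closedBall.measurableSet
    have hS : MeasurableSet ((E j \ B) ∩ {x | x + v ∈ B \ E j}) :=
      ((hE j).diff hBm).inter ((hBm.diff (hE j)).preimage (by fun_prop))
    rw [← hpre', ← hpre' (_ ∩ {x | x + v ∈ B \ E j}), prod_fib (Ψ.symm.measurable ((hE j).inter hBm)),
      prod_fib (Ψ.symm.measurable hS), ← lintegral_add_left
        (measurable_volume_fib (Ψ.symm.measurable ((hE j).inter hBm)))]
    refine lintegral_mono fun x => ?_
    -- the two summands embed disjointly in the fibre of `E j`, and, after a shift of the second,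
    -- in the fibre of the ball
    set a := (Ψ v).1
    have hΨv : Ψ v = (a, 0) := Prod.ext rfl hv
    have hshift : ∀ y, Ψ.symm (y + a, x) = Ψ.symm (y, x) + v := by
      intro y
      apply Ψ.injective
      rw [hadd, hΨv]
      simp
    have m1 := fib_measurable (Ψ.symm.measurable ((hE j).inter hBm)) x
    have m2 := fib_measurable (Ψ.symm.measurable hS) x
    have m3 := fib_measurable (Ψ.symm.measurable (hBm.diff (hE j))) x
    refine le_min ?_ ?_
    · rw [← measure_union _ m2]
      · refine measure_mono ?_
        rintro y (hy | hy)
        · exact hy.1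
        · exact hy.1.1
      · refine disjoint_left.2 fun y hy hy' => hy'.1.2 hy.2
    · have hle : volume (fib (Ψ.symm ⁻¹' ((E j \ B) ∩ {x | x + v ∈ B \ E j})) x) ≤
          volume (fib (Ψ.symm ⁻¹' (B \ E j)) x) := by
        rw [← measure_preimage_add_right volume a (fib (Ψ.symm ⁻¹' (B \ E j)) x)]
        refine measure_mono fun y hy => ?_
        change Ψ.symm (y + a, x) ∈ B \ E j
        rw [hshift]
        exact hy.2
      refine (add_le_add le_rfl hle).trans ?_
      rw [← measure_union _ m3]
      · refine measure_mono ?_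
        rintro y (hy | hy)
        · exact hy.2
        · exact hy.1
      · refine disjoint_left.2 fun y hy hy' => hy'.2 hy.1

/-! ### A quantitative gain -/

/-- Averaging the overlap of `A` with the translates of `C` over the translations
by vectors of norm at most `2 * R` captures the whole product `|A| |C|`. -/
lemma lintegral_overlap {d : ℕ} {A C : Set (Vec d)} (hA : MeasurableSet A) (hC : MeasurableSet C)
    {R : ℝ} (hCR : C ⊆ Metric.closedBall 0 R) (hAR : volume (A \ Metric.closedBall 0 R) = 0) :
    volume A * volume C ≤
      ∫⁻ v in Metric.closedBall (0 : Vec d) (2 * R), volume (A ∩ {x | x + v ∈ C}) := by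
  have hS : MeasurableSet {p : Vec d × Vec d | p.2 ∈ A ∧ p.2 + p.1 ∈ C} :=
    (measurable_snd hA).inter (hC.preimage (by fun_prop))
  set K := Metric.closedBall (0 : Vec d) (2 * R) with hK
  have hKm : MeasurableSet K := Metric.isClosed_closedBall.measurableSet
  have e1 : ∫⁻ v in K, volume (A ∩ {x | x + v ∈ C}) =
      ((volume.restrict K).prod volume) {p : Vec d × Vec d | p.2 ∈ A ∧ p.2 + p.1 ∈ C} :=
    (Measure.prod_apply hS).symm
  rw [e1, Measure.prod_apply_symm hS]
  have hA' : volume A = volume (A ∩ Metric.closedBall 0 R) := by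
    rw [← measure_inter_add_sdiff A (Metric.isClosed_closedBall (x := (0 : Vec d)) (ε := R)).measurableSet,
      hAR, add_zero]
  have hm : MeasurableSet (A ∩ Metric.closedBall 0 R) :=
    hA.inter Metric.isClosed_closedBall.measurableSet
  rw [hA', mul_comm, ← lintegral_indicator_const hm]
  refine lintegral_mono fun x => ?_
  by_cases hx : x ∈ A ∩ Metric.closedBall 0 R
  · rw [indicator_of_mem hx, ← measure_preimage_add volume x C]
    have : (fun v => (v, x)) ⁻¹' {p : Vec d × Vec d | p.2 ∈ A ∧ p.2 + p.1 ∈ C} =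
        (fun v => x + v) ⁻¹' C := by
      ext v; simp [hx.1]
    rw [this, Measure.restrict_apply (hC.preimage (by fun_prop)), inter_eq_left.2]
    intro v hv
    have h1 : ‖x + v‖ ≤ R := by simpa using hCR hv
    have h2 : ‖x‖ ≤ R := by simpa using hx.2
    have h3 : ‖v‖ ≤ ‖x + v‖ + ‖x‖ := by
      have := norm_sub_le (x + v) x
      rwa [add_sub_cancel_left] at this
    simp only [hK, Metric.mem_closedBall, dist_zero_right]
    linarith
  · rw [indicator_of_notMem hx]; exact zero_le

/-- Triples with prescribed measures, essentially contained in the ball of radius `R`. -/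
structure GoodTriple {n : ℕ} (R : ℝ) (m : Fin 3 → ENNReal) (E : Fin 3 → Set (Vec (n + 1))) :
    Prop where
  meas : ∀ j, MeasurableSet (E j)
  measure_eq : ∀ j, volume (E j) = m j
  inter_eq : ∀ j, volume (E j ∩ Metric.closedBall 0 R) = m j

/-- Some direction `v` with `‖v‖ ≤ 2 * R` realizes at least the average gain. Since `E j` and its
ball `B j` have equal measure, `|B j \ E j| = |E j \ B j|`, and the average of
`|(E j \ B j) ∩ (B j \ E j - v)|` is at least `|E j \ B j| ^ 2` divided by the measure of the
ball of radius `2 * R`. -/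
lemma exists_gain_step {n : ℕ} {R : ℝ} (hR : 0 < R) {m : Fin 3 → ENNReal} (hm : ∀ j, m j ≠ ⊤)
    {ρ : Fin 3 → ℝ} (hρR : ∀ j, ρ j ≤ R)
    (hρ : ∀ j, volume (Metric.closedBall (0 : Vec (n + 1)) (ρ j)) = m j)
    {E : Fin 3 → Set (Vec (n + 1))} (hE : GoodTriple R m E) :
    ∃ F, IsFlow volume E F ∧
      (∀ j r t, volume (E j ∩ Metric.closedBall 0 r) ≤ volume (F j t ∩ Metric.closedBall 0 r)) ∧
      (∑ j, volume (E j ∩ Metric.closedBall 0 (ρ j))) *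
          volume (Metric.closedBall (0 : Vec (n + 1)) (2 * R)) +
        ∑ j, volume (E j \ Metric.closedBall 0 (ρ j)) ^ 2 ≤
      (∑ j, volume (F j 1 ∩ Metric.closedBall 0 (ρ j))) *
          volume (Metric.closedBall (0 : Vec (n + 1)) (2 * R)) := by
  set K := Metric.closedBall (0 : Vec (n + 1)) (2 * R) with hK
  have hbm : ∀ r, MeasurableSet (Metric.closedBall (0 : Vec (n + 1)) r) := fun r =>
    Metric.isClosed_closedBall.measurableSet
  set A : Fin 3 → Set (Vec (n + 1)) := fun j => E j \ Metric.closedBall 0 (ρ j)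
  set C : Fin 3 → Set (Vec (n + 1)) := fun j => Metric.closedBall 0 (ρ j) \ E j
  have hA : ∀ j, MeasurableSet (A j) := fun j => (hE.meas j).diff (hbm _)
  have hC : ∀ j, MeasurableSet (C j) := fun j => (hbm _).diff (hE.meas j)
  have hAC : ∀ j, volume (A j) = volume (C j) := by
    intro j
    have h1 := measure_inter_add_sdiff (μ := volume) (E j) (hbm (ρ j))
    have h2 := measure_inter_add_sdiff (μ := volume) (Metric.closedBall 0 (ρ j)) (hE.meas j)
    rw [hρ, ← hE.measure_eq j, ← h1, inter_comm] at h2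
    exact ((ENNReal.add_right_inj (ne_top_of_le_ne_top (hm j) (by
      rw [← hE.measure_eq j]; exact measure_mono inter_subset_left))).1 h2).symm
  have hAR : ∀ j, volume (A j \ Metric.closedBall 0 R) = 0 := by
    intro j
    refine measure_mono_null (sdiff_subset_sdiff_left sdiff_subset) ?_
    have h1 := measure_inter_add_sdiff (μ := volume) (E j) (hbm R)
    rw [hE.inter_eq, hE.measure_eq] at h1
    exact (ENNReal.add_right_inj (hm j)).1 (h1.trans (add_zero _).symm)
  have hCR : ∀ j, C j ⊆ Metric.closedBall 0 R := fun j =>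
    sdiff_subset.trans (Metric.closedBall_subset_closedBall (hρR j))
  set f : Vec (n + 1) → ENNReal := fun v => ∑ j, volume (A j ∩ {x | x + v ∈ C j}) with hf
  have hfm : ∀ j, Measurable fun v => volume (A j ∩ {x | x + v ∈ C j}) := by
    intro j
    have hS : MeasurableSet {p : Vec (n + 1) × Vec (n + 1) | p.2 ∈ A j ∧ p.2 + p.1 ∈ C j} :=
      (measurable_snd (hA j)).inter ((hC j).preimage (by fun_prop))
    exact measurable_measure_prodMk_left hS
  have hfint : ∑ j, volume (A j) ^ 2 ≤ ∫⁻ v in K, f v := by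
    rw [hf, lintegral_finsetSum _ fun j _ => hfm j]
    refine Finset.sum_le_sum fun j _ => ?_
    rw [sq]
    nth_rewrite 2 [hAC]
    exact lintegral_overlap (hA j) (hC j) (hCR j) (hAR j)
  have hK0 : volume K ≠ 0 := (Metric.measure_closedBall_pos volume _ (by positivity)).ne'
  have hKt : volume K ≠ ⊤ := measure_closedBall_lt_top.ne
  have hflt : ∫⁻ v in K, f v ≠ ⊤ := by
    have : ∫⁻ v in K, f v ≤ ∫⁻ v in K, ∑ j, m j := by
      refine lintegral_mono fun v => Finset.sum_le_sum fun j _ => ?_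
      rw [← hE.measure_eq]
      exact measure_mono (inter_subset_left.trans sdiff_subset)
    refine ne_top_of_le_ne_top ?_ this
    rw [setLIntegral_const]
    exact ENNReal.mul_ne_top (ENNReal.sum_ne_top.2 fun j _ => hm j) hKt
  obtain ⟨v, -, hv⟩ := exists_setLAverage_le hK0 (hbm _).nullMeasurableSet hflt
  have hv' : ∑ j, volume (A j) ^ 2 ≤ f v * volume K := by
    refine hfint.trans ?_
    rw [setLAverage_eq] at hv
    exact (ENNReal.div_le_iff hK0 hKt).1 hv
  obtain ⟨F, hF, h1, h2⟩ := exists_step hE.meas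
    (fun j => by rw [hE.measure_eq]; exact hm j) v
  refine ⟨F, hF, h1, ?_⟩
  refine (add_le_add le_rfl hv').trans ?_
  rw [← add_mul, hf, ← Finset.sum_add_distrib]
  gcongr with j
  exact h2 j (ρ j)

/-! ### Concatenation and iteration -/

section Glue

variable {G : Type*} [MeasurableSpace G] [AddCommGroup G] {μ : Measure G}

/-- Concatenation of a sequence of paths, the `n`-th one being run on `[n, n + 1]`. -/
def glue (P : ℕ → Fin 3 → ℝ → Set G) (j : Fin 3) (s : ℝ) : Set G :=
  P ⌊s⌋₊ j (s - ⌊s⌋₊)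

variable {E : ℕ → Fin 3 → Set G} {P : ℕ → Fin 3 → ℝ → Set G}

lemma glue_eq (hP : ∀ n, IsFlow μ (E n) (P n)) (hE : ∀ n j, P n j 1 = E (n + 1) j) (j : Fin 3)
    {n : ℕ} {s : ℝ} (h1 : n ≤ s) (h2 : s ≤ n + 1) : glue P j s = P n j (s - n) := by
  rcases h2.eq_or_lt with h | h
  · have hf : ⌊s⌋₊ = n + 1 := by
      rw [h]; exact_mod_cast Nat.floor_natCast (n + 1)
    rw [glue, hf, h]
    push_cast
    rw [sub_self, add_sub_cancel_left, hE, (hP (n + 1)).initial _ _ le_rfl]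
  · have hf : ⌊s⌋₊ = n := (Nat.floor_eq_iff ((Nat.cast_nonneg n).trans h1)).2 ⟨h1, h⟩
    rw [glue, hf]

lemma glue_nat (hP : ∀ n, IsFlow μ (E n) (P n)) (j : Fin 3) (n : ℕ) :
    glue P j n = E n j := by
  rw [glue, Nat.floor_natCast, sub_self, (hP n).initial _ _ le_rfl]

lemma glue_cont (hP : ∀ n, IsFlow μ (E n) (P n)) (hE : ∀ n j, P n j 1 = E (n + 1) j) (j : Fin 3)
    (s : ℝ) (hs : 0 ≤ s) :
    Filter.Tendsto (fun u => μ (symmDiff (glue P j u) (glue P j s)))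
      (nhdsWithin s (Ici 0)) (nhds 0) := by
  have key : ∀ n : ℕ, n ≤ s → s ≤ n + 1 → ∀ S : Set ℝ, Icc (n : ℝ) (n + 1) ∈ nhdsWithin s S →
      Filter.Tendsto (fun u => μ (symmDiff (glue P j u) (glue P j s)))
        (nhdsWithin s S) (nhds 0) := by
    intro n h1 h2 S hS
    have hc : Filter.Tendsto (fun u : ℝ => u - n) (nhdsWithin s S) (nhds (s - n)) :=
      (Continuous.tendsto (by fun_prop) s).mono_left nhdsWithin_le_nhds
    refine (((hP n).cont j (s - n)).comp hc).congr' ?_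
    filter_upwards [hS] with u hu
    rw [glue_eq hP hE j h1 h2, glue_eq hP hE j hu.1 hu.2]
    rfl
  have hright : Filter.Tendsto (fun u => μ (symmDiff (glue P j u) (glue P j s)))
      (nhdsWithin s (Ici s)) (nhds 0) := by
    have hf := Nat.floor_le hs
    have hl := Nat.lt_floor_add_one s
    refine key ⌊s⌋₊ hf hl.le _ ?_
    filter_upwards [Icc_mem_nhdsGE hl] with u hu
    exact ⟨hf.trans hu.1, hu.2⟩
  rcases hs.eq_or_lt with h0 | h0
  · rwa [← h0] at hright ⊢
  · have hleft : Filter.Tendsto (fun u => μ (symmDiff (glue P j u) (glue P j s)))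
        (nhdsWithin s (Iio s)) (nhds 0) := by
      obtain ⟨k, hk⟩ : ∃ k, ⌈s⌉₊ = k + 1 := Nat.exists_eq_succ_of_ne_zero (Nat.ceil_pos.2 h0).ne'
      have hle : s ≤ k + 1 := by
        have := Nat.le_ceil s
        rw [hk] at this
        exact_mod_cast this
      have hlt : (k : ℝ) < s := Nat.lt_ceil.1 (by omega)
      refine key k hlt.le hle _ ?_
      filter_upwards [Ico_mem_nhdsLT hlt] with u hu
      exact ⟨hu.1, hu.2.le.trans hle⟩
    have : Filter.Tendsto (fun u => μ (symmDiff (glue P j u) (glue P j s))) (nhds s) (nhds 0) := by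
      rw [← nhdsLT_sup_nhdsGE]
      exact hleft.sup hright
    exact this.mono_left nhdsWithin_le_nhds

lemma glue_mono (hP : ∀ n, IsFlow μ (E n) (P n)) (hE : ∀ n j, P n j 1 = E (n + 1) j) :
    MonotoneOn (fun s => TT μ (glue P 0 s) (glue P 1 s) (glue P 2 s)) (Ici 0) := by
  have hstep : ∀ (n : ℕ) (s t : ℝ), n ≤ s → s ≤ t → t ≤ n + 1 →
      TT μ (glue P 0 s) (glue P 1 s) (glue P 2 s) ≤
        TT μ (glue P 0 t) (glue P 1 t) (glue P 2 t) := by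
    intro n s t h1 h2 h3
    simp_rw [glue_eq hP hE _ h1 (h2.trans h3), glue_eq hP hE _ (h1.trans h2) h3]
    exact (hP n).mono (sub_le_sub_right h2 _)
  have hnat : Monotone fun n : ℕ => TT μ (glue P 0 n) (glue P 1 n) (glue P 2 n) := by
    refine monotone_nat_of_le_succ fun n => hstep n _ _ le_rfl ?_ ?_ <;> push_cast <;> linarith
  intro s hs t ht hst
  rcases (Nat.floor_mono hst).eq_or_lt with h | h
  · exact hstep ⌊s⌋₊ s t (Nat.floor_le hs) hst (by rw [h]; exact (Nat.lt_floor_add_one t).le)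
  · refine (hstep ⌊s⌋₊ s (⌊s⌋₊ + 1 : ℕ) (Nat.floor_le hs) ?_ ?_).trans
      ((hnat h).trans (hstep ⌊t⌋₊ _ t le_rfl (Nat.floor_le ht) (Nat.lt_floor_add_one t).le))
    · push_cast; exact (Nat.lt_floor_add_one s).le
    · push_cast; exact le_rfl

end Glue

lemma volume_ballStar {n : ℕ} {E : Set (Vec (n + 1))} (hE : volume E ≠ ⊤) :
    volume (ballStar E) = volume E := by
  set ω := volume (Metric.closedBall (0 : Vec (n + 1)) 1) with hω
  have hωt : ω ≠ ⊤ := measure_closedBall_lt_top.ne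
  have hω0 : ω ≠ 0 := (Metric.measure_closedBall_pos volume _ one_pos).ne'
  have hpos : 0 < ω.toReal := ENNReal.toReal_pos hω0 hωt
  have hq : 0 ≤ (volume E).toReal / ω.toReal := by positivity
  rw [ballStar, Measure.addHaar_closedBall' _ _ (by positivity), ← hω, finrank_euclideanSpace_fin,
    ← Real.rpow_natCast, ← Real.rpow_mul hq, one_div, inv_mul_cancel₀ (by positivity),
    Real.rpow_one, ENNReal.ofReal_div_of_pos hpos, ENNReal.ofReal_toReal hE,
    ENNReal.ofReal_toReal hωt, ENNReal.div_mul_cancel hω0 hωt]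

lemma Tfun_eq {d : ℕ} {E : Fin 3 → Set (Vec d)} (hE : ∀ j, MeasurableSet (E j)) :
    Tfun E = (TT volume (E 0) (E 1) (E 2)).toReal := by
  have hS : MeasurableSet {p : Vec d × Vec d | p.1 ∈ E 0 ∧ p.2 ∈ E 1 ∧ -p.1 - p.2 ∈ E 2} :=
    (measurable_fst (hE 0)).inter ((measurable_snd (hE 1)).inter ((hE 2).preimage (by fun_prop)))
  rw [Tfun, TT]
  have := integral_indicator_one (μ := (volume : Measure (Vec d × Vec d))) hS
  rw [Measure.real, Measure.volume_eq_prod] at this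
  rw [← this, Measure.volume_eq_prod]
  congr 1
  ext p
  by_cases h0 : p.1 ∈ E 0 <;> by_cases h1 : p.2 ∈ E 1 <;> by_cases h2 : -p.1 - p.2 ∈ E 2 <;>
    simp [ind, indicator, h0, h1, h2]

/-- Iterating the gain step produces a sequence of triples converging to balls: the overlaps with
the balls are bounded, hence the gains `∑ j, |E k j \ B j| ^ 2` are summable in `k`. -/
lemma exists_sequence {n : ℕ} {R : ℝ} (hR : 0 < R) {m : Fin 3 → ENNReal} (hm : ∀ j, m j ≠ ⊤)
    {ρ : Fin 3 → ℝ} (hρR : ∀ j, ρ j ≤ R)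
    (hρ : ∀ j, volume (Metric.closedBall (0 : Vec (n + 1)) (ρ j)) = m j)
    {E₀ : Fin 3 → Set (Vec (n + 1))} (hE₀ : GoodTriple R m E₀) :
    ∃ (E : ℕ → Fin 3 → Set (Vec (n + 1))) (P : ℕ → Fin 3 → ℝ → Set (Vec (n + 1))),
      E 0 = E₀ ∧ (∀ k, GoodTriple R m (E k)) ∧ (∀ k, IsFlow volume (E k) (P k)) ∧
      (∀ k j, P k j 1 = E (k + 1) j) ∧
      (∀ k j r t, volume (E k j ∩ Metric.closedBall 0 r) ≤
        volume (P k j t ∩ Metric.closedBall 0 r)) ∧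
      ∀ j, Filter.Tendsto (fun k => volume (E k j \ Metric.closedBall 0 (ρ j)))
        Filter.atTop (nhds 0) := by
  choose! Q hQ1 hQ2 hQ3 using fun (E : Fin 3 → Set (Vec (n + 1))) (hE : GoodTriple R m E) =>
    exists_gain_step hR hm hρR hρ hE
  set E : ℕ → Fin 3 → Set (Vec (n + 1)) := fun k => (fun E j => Q E j 1)^[k] E₀ with hEdef
  have hsucc : ∀ k j, Q (E k) j 1 = E (k + 1) j := by
    intro k j
    simp only [hEdef, Function.iterate_succ_apply']
  have hgood : ∀ k, GoodTriple R m (E k) := by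
    intro k
    induction k with
    | zero => exact hE₀
    | succ k ih =>
      have hmeq : ∀ j, volume (E (k + 1) j) = m j := fun j => by
        rw [← hsucc, (hQ1 _ ih).measure_eq, ih.measure_eq]
      refine ⟨fun j => ?_, hmeq, fun j => le_antisymm ?_ ?_⟩
      · rw [← hsucc]; exact (hQ1 _ ih).meas j 1
      · rw [← hmeq]; exact measure_mono inter_subset_left
      · rw [← hsucc]
        exact (ih.inter_eq j).symm.le.trans (hQ2 _ ih j R 1)
  refine ⟨E, fun k => Q (E k), rfl, hgood, fun k => hQ1 _ (hgood k), hsucc,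
    fun k => hQ2 _ (hgood k), ?_⟩
  set K := volume (Metric.closedBall (0 : Vec (n + 1)) (2 * R)) with hK
  set g : ℕ → ENNReal := fun k => ∑ j, volume (E k j \ Metric.closedBall 0 (ρ j)) ^ 2 with hg
  have hsum : ∀ N, ∑ k ∈ Finset.range N, g k ≤
      (∑ j, volume (E N j ∩ Metric.closedBall 0 (ρ j))) * K := by
    intro N
    induction N with
    | zero => simp
    | succ N ih =>
      rw [Finset.sum_range_succ]
      refine (add_le_add ih le_rfl).trans ((hQ3 _ (hgood N)).trans ?_)
      simp_rw [hsucc]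
      exact le_rfl
  have htsum : ∑' k, g k ≠ ⊤ := by
    refine ne_top_of_le_ne_top (b := (∑ j, m j) * K) ?_ ?_
    · exact ENNReal.mul_ne_top (ENNReal.sum_ne_top.2 fun j _ => hm j) measure_closedBall_lt_top.ne
    · rw [ENNReal.tsum_eq_iSup_nat]
      refine iSup_le fun N => (hsum N).trans ?_
      gcongr with j
      rw [← (hgood N).measure_eq j]
      exact measure_mono inter_subset_left
  have hlim := ENNReal.tendsto_atTop_zero_of_tsum_ne_top htsum
  intro j
  rw [ENNReal.tendsto_nhds_zero] at hlim ⊢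
  intro ε hε
  filter_upwards [hlim (ε ^ 2) (ENNReal.pow_pos hε 2)] with k hk
  have h1 : volume (E k j \ Metric.closedBall 0 (ρ j)) ^ 2 ≤ ε ^ 2 :=
    (Finset.single_le_sum (f := fun j => volume (E k j \ Metric.closedBall 0 (ρ j)) ^ 2)
      (fun _ _ => zero_le) (Finset.mem_univ j)).trans hk
  exact (ENNReal.pow_right_strictMono two_ne_zero).le_iff_le.1 h1

/-- Overlap with `B` never decreases, so convergence along the integers implies convergence along
the whole half-line. -/
lemma tendsto_final {n : ℕ} {m : ENNReal} (hm : m ≠ ⊤) {B : Set (Vec (n + 1))}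
    (hB : MeasurableSet B) (hBm : volume B = m) {A : ℕ → Set (Vec (n + 1))}
    (hA : ∀ k, volume (A k) = m)
    (hlim : Filter.Tendsto (fun k => volume (A k \ B)) Filter.atTop (nhds 0))
    {H : ℝ → Set (Vec (n + 1))} (hHm : ∀ s, MeasurableSet (H s)) (hH : ∀ s, volume (H s) = m)
    (hAH : ∀ (k : ℕ) (s : ℝ), k ≤ s → volume (A k ∩ B) ≤ volume (H s ∩ B)) :
    Filter.Tendsto (fun s => volume (symmDiff (H s) B)) Filter.atTop (nhds 0) := by
  rw [ENNReal.tendsto_nhds_zero] at hlim ⊢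
  intro ε hε
  obtain ⟨k, hk⟩ := (hlim (ε / 2) (ENNReal.half_pos hε.ne')).exists
  filter_upwards [Filter.eventually_ge_atTop (k : ℝ)] with s hs
  have h1 := measure_inter_add_sdiff (μ := volume) (H s) hB
  have h2 := measure_inter_add_sdiff (μ := volume) (A k) hB
  have h3 := measure_inter_add_sdiff (μ := volume) B (hHm s)
  have hfin : volume (H s ∩ B) ≠ ⊤ :=
    ne_top_of_le_ne_top hm (by rw [← hH s]; exact measure_mono inter_subset_left)
  have h4 : volume (H s \ B) ≤ ε / 2 := by
    refine le_trans ((ENNReal.add_le_add_iff_left hfin).1 ?_) hk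
    rw [h1, hH, ← hA k, ← h2]
    exact add_le_add (hAH k s hs) le_rfl
  have h5 : volume (B \ H s) = volume (H s \ B) := by
    rw [hBm, ← hH s, ← h1, inter_comm] at h3
    exact (ENNReal.add_right_inj hfin).1 h3
  rw [measure_symmDiff_eq (hHm s).nullMeasurableSet hB.nullMeasurableSet, h5,
    ← ENNReal.add_halves ε]
  exact add_le_add h4 h4

/-- Existence of a monotone continuous symmetrizing deformation of a triple of bounded
measurable subsets of `ℝ^d` into the corresponding triple of balls. -/
theorem exists_flow_higher_dim (d : ℕ) (hd : 1 ≤ d) (E : Fin 3 → Set (Vec d))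
    (hmeas : ∀ j, MeasurableSet (E j)) (hbdd : ∀ j, Bornology.IsBounded (E j)) :
    ∃ F : Fin 3 → ℝ → Set (Vec d),
      (∀ j t, t ∈ Set.Icc (0:ℝ) 1 → MeasurableSet (F j t)) ∧
      -- (1) endpoints
      (∀ j, volume (symmDiff (F j 0) (E j)) = 0) ∧
      (∀ j, volume (symmDiff (F j 1) (ballStar (E j))) = 0) ∧
      -- (2) measure preservation
      (∀ j, ∀ t ∈ Set.Icc (0:ℝ) 1, volume (F j t) = volume (E j)) ∧
      -- (3) continuity
      (∀ j, ∀ t ∈ Set.Icc (0:ℝ) 1,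
        Filter.Tendsto (fun s => (volume (symmDiff (F j s) (F j t))).toReal)
          (nhdsWithin t (Set.Icc (0:ℝ) 1)) (nhds 0)) ∧
      -- (4) functional continuity and monotonicity
      ContinuousOn (fun t => Tfun (fun j => F j t)) (Set.Icc 0 1) ∧
      MonotoneOn (fun t => Tfun (fun j => F j t)) (Set.Icc 0 1) := by
  obtain ⟨n, rfl⟩ : ∃ n, d = n + 1 := ⟨d - 1, by omega⟩
  have hfin : ∀ j, volume (E j) ≠ ⊤ := fun j => (hbdd j).measure_lt_top.ne
  set ρ : Fin 3 → ℝ := fun j => ((volume (E j)).toReal /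
    (volume (Metric.closedBall (0 : Vec (n + 1)) 1)).toReal) ^ ((1 : ℝ) / (n + 1 : ℕ)) with hρdef
  have hball : ∀ j, ballStar (E j) = Metric.closedBall 0 (ρ j) := fun j => rfl
  have hρ : ∀ j, volume (Metric.closedBall (0 : Vec (n + 1)) (ρ j)) = volume (E j) := fun j => by
    rw [← hball, volume_ballStar (hfin j)]
  choose r hr using fun j => (hbdd j).subset_closedBall (0 : Vec (n + 1))
  set R : ℝ := 1 + ∑ j, (|r j| + |ρ j|) with hRdef
  have hle : ∀ j, |r j| + |ρ j| ≤ R := fun j => by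
    have := Finset.single_le_sum (f := fun j => |r j| + |ρ j|) (fun j _ => by positivity)
      (Finset.mem_univ j)
    linarith
  have hR : 0 < R := by positivity
  have hρR : ∀ j, ρ j ≤ R := fun j => by
    linarith [hle j, abs_nonneg (r j), le_abs_self (ρ j)]
  have hgood : GoodTriple R (fun j => volume (E j)) E := by
    refine ⟨hmeas, fun j => rfl, fun j => ?_⟩
    rw [inter_eq_left.2]
    refine (hr j).trans (Metric.closedBall_subset_closedBall ?_)
    linarith [hle j, abs_nonneg (ρ j), le_abs_self (r j)]
  obtain ⟨S, P, hS0, hSg, hP, hPS, hPball, hlim⟩ := exists_sequence hR hfin hρR hρ hgood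
  have hHm : ∀ j s, MeasurableSet (glue P j s) := fun j s => (hP _).meas _ _
  have hHv : ∀ j s, volume (glue P j s) = volume (E j) := fun j s =>
    ((hP _).measure_eq _ _).trans ((hSg _).measure_eq j)
  have hbm : ∀ j, MeasurableSet (Metric.closedBall (0 : Vec (n + 1)) (ρ j)) := fun j =>
    Metric.isClosed_closedBall.measurableSet
  have hfinal : ∀ j, Filter.Tendsto (fun s => volume (symmDiff (glue P j s)
      (Metric.closedBall 0 (ρ j)))) Filter.atTop (nhds 0) := by
    intro j
    refine tendsto_final (hfin j) (hbm j) (hρ j) (fun k => (hSg k).measure_eq j) (hlim j)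
      (hHm j) (hHv j) fun k s hks => ?_
    have hmono : Monotone fun k => volume (S k j ∩ Metric.closedBall 0 (ρ j)) :=
      monotone_nat_of_le_succ fun k => by rw [← hPS]; exact hPball k j _ 1
    exact (hmono (Nat.le_floor hks)).trans (hPball _ j _ _)
  -- the half-line is compressed to `[0, 1)` by `t ↦ t / (1 - t)`
  set F : Fin 3 → ℝ → Set (Vec (n + 1)) := fun j t =>
    if t < 1 then glue P j (t / (1 - t)) else Metric.closedBall 0 (ρ j) with hF
  have hF1 : ∀ j, F j 1 = Metric.closedBall 0 (ρ j) := fun j => by simp [hF]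
  have hFlt : ∀ j t, t < 1 → F j t = glue P j (t / (1 - t)) := fun j t ht => by simp [hF, ht]
  have hFm : ∀ j t, MeasurableSet (F j t) := by
    intro j t
    dsimp only [F]
    split_ifs
    exacts [hHm _ _, hbm j]
  have hFv : ∀ j t, volume (F j t) = volume (E j) := by
    intro j t
    dsimp only [F]
    split_ifs
    exacts [hHv _ _, hρ j]
  have hnn : ∀ {t : ℝ}, 0 ≤ t → t < 1 → 0 ≤ t / (1 - t) := fun h0 h1 =>
    div_nonneg h0 (by linarith)
  have hcont : ∀ j, ∀ t ∈ Icc (0 : ℝ) 1, Filter.Tendsto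
      (fun s => volume (symmDiff (F j s) (F j t))) (nhdsWithin t (Icc 0 1)) (nhds 0) := by
    intro j t ht
    rcases ht.2.eq_or_lt with rfl | h1
    · rw [hF1, ENNReal.tendsto_nhds_zero]
      intro ε hε
      obtain ⟨N, hN⟩ := Filter.eventually_atTop.1
        ((ENNReal.tendsto_nhds_zero.1 (hfinal j)) ε hε)
      set M := max N 0
      have hM : 0 ≤ M := le_max_right _ _
      have hlt : M / (M + 1) < 1 := (div_lt_one (by linarith)).2 (by linarith)
      filter_upwards [nhdsWithin_le_nhds (Ioi_mem_nhds hlt), self_mem_nhdsWithin] with s hs hs'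
      rcases hs'.2.eq_or_lt with rfl | h
      · rw [hF1, symmDiff_self]; simp
      · rw [hFlt j s h]
        refine hN _ ((le_max_left N 0).trans ?_)
        rw [le_div_iff₀ (by linarith)]
        have := (div_lt_iff₀ (by linarith : 0 < M + 1)).1 hs
        nlinarith
    · have hc : Filter.Tendsto (fun s : ℝ => s / (1 - s)) (nhdsWithin t (Icc 0 1 ∩ Iio 1))
          (nhdsWithin (t / (1 - t)) (Ici 0)) := by
        refine tendsto_nhdsWithin_iff.2 ⟨?_, ?_⟩
        · refine Filter.Tendsto.mono_left ?_ nhdsWithin_le_nhds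
          exact Filter.Tendsto.div Filter.tendsto_id (tendsto_const_nhds.sub Filter.tendsto_id)
            (by linarith)
        · filter_upwards [self_mem_nhdsWithin] with s hs
          exact hnn hs.1.1 hs.2
      rw [← nhdsWithin_inter_of_mem' (nhdsWithin_le_nhds (Iio_mem_nhds h1))]
      refine ((glue_cont hP hPS j _ (hnn ht.1 h1)).comp hc).congr' ?_
      filter_upwards [self_mem_nhdsWithin] with s hs
      rw [hFlt j s hs.2, hFlt j t h1]
      rfl
  have hTcont : ∀ t ∈ Icc (0 : ℝ) 1, Filter.Tendsto (fun s => TT volume (F 0 s) (F 1 s) (F 2 s))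
      (nhdsWithin t (Icc 0 1)) (nhds (TT volume (F 0 t) (F 1 t) (F 2 t))) := fun t ht =>
    tendsto_TT (fun x => Measure.measurePreserving_sub_left volume (-x)) (fun s => hFm 0 s)
      (fun s => hFm 2 s) (hFm 0 t) (hFm 2 t) (by rw [hFv]; exact hfin 0)
      (by rw [hFv]; exact hfin 1) (hcont 0 t ht) (hcont 1 t ht) (hcont 2 t ht)
  have hTtop : ∀ t, TT volume (F 0 t) (F 1 t) (F 2 t) ≠ ⊤ := fun t =>
    ne_top_of_le_ne_top (ENNReal.mul_ne_top (hfin 0) (hfin 1)) (by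
      rw [← hFv 0 t, ← hFv 1 t]; exact TT_le_mul_left _ _ _)
  have hTlt : ∀ s t, 0 ≤ s → s ≤ t → t < 1 → TT volume (F 0 s) (F 1 s) (F 2 s) ≤
      TT volume (F 0 t) (F 1 t) (F 2 t) := by
    intro s t h0 hst h1
    have hs1 := hst.trans_lt h1
    simp_rw [hFlt _ s hs1, hFlt _ t h1]
    refine glue_mono hP hPS (hnn h0 hs1) (hnn (h0.trans hst) h1) ?_
    rw [div_le_div_iff₀ (by linarith) (by linarith)]
    nlinarith
  have hTmono : ∀ s t, 0 ≤ s → s ≤ t → t ≤ 1 → TT volume (F 0 s) (F 1 s) (F 2 s) ≤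
      TT volume (F 0 t) (F 1 t) (F 2 t) := by
    intro s t h0 hst h1
    rcases h1.eq_or_lt with rfl | h1
    · rcases hst.eq_or_lt with rfl | hs1
      · exact le_rfl
      · have hsub : nhdsWithin (1 : ℝ) (Ico s 1) ≤ nhdsWithin 1 (Icc 0 1) :=
          nhdsWithin_mono _ fun u hu => ⟨h0.trans hu.1, hu.2.le⟩
        have : (nhdsWithin (1 : ℝ) (Ico s 1)).NeBot := by
          rw [nhdsWithin_Ico_eq_nhdsLT hs1]; infer_instance
        refine ge_of_tendsto ((hTcont 1 ⟨zero_le_one, le_rfl⟩).mono_left hsub) ?_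
        filter_upwards [self_mem_nhdsWithin] with u hu
        exact hTlt s u h0 hu.1 hu.2
    · exact hTlt s t h0 hst h1
  have hTeq : ∀ t, Tfun (fun j => F j t) = (TT volume (F 0 t) (F 1 t) (F 2 t)).toReal := fun t =>
    Tfun_eq fun j => hFm j t
  refine ⟨F, fun j t _ => hFm j t, fun j => ?_, fun j => ?_, fun j t _ => hFv j t,
    fun j t ht => ?_, fun t ht => ?_, fun s hs t ht hst => ?_⟩
  · have : F j 0 = E j := by
      rw [hFlt j 0 one_pos, zero_div]
      have := glue_nat hP j 0
      rwa [Nat.cast_zero, hS0] at this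
    rw [this, symmDiff_self]
    simp
  · rw [hF1, hball, symmDiff_self]
    simp
  · exact (ENNReal.tendsto_toReal ENNReal.zero_ne_top).comp (hcont j t ht)
  · simp only [ContinuousWithinAt, hTeq]
    exact (ENNReal.tendsto_toReal (hTtop t)).comp (hTcont t ht)
  · simp only [hTeq]
    exact ENNReal.toReal_mono (hTtop t) (hTmono s t hs.1 hst ht.2)
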